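/- arXiv:1405.2999 — 2 statements merged into one kernel-verified Lean document; each statement's English description precedes it below -/
import Mathlib

section
/- Let n ≥ 2, M ≥ 1, and let A be a constant complex coefficient tensor satisfying the Legendre–Hadamard ellipticity condition, with associated system L_A. If P : ℝ^{n-1} → ℂ^{M×M} and Q : ℝ^{n-1} → ℂ^{M×M} are both Poisson kernels for L_A in ℝⁿ₊, then P = Q almost everywhere on ℝ^{n-1}. -/
open MeasureTheory Filter Metric Real
open scoped ENNReal NNReal Topology

noncomputable section

/-- The point `(x', t)` of `ℝⁿ`, where `x' ∈ ℝ^{n-1}` and `t ∈ ℝ` is the last coordinate. -/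
def toUp {n : ℕ} (x' : EuclideanSpace ℝ (Fin (n - 1))) (t : ℝ) :
    EuclideanSpace ℝ (Fin n) :=
  (WithLp.equiv 2 (Fin n → ℝ)).symm
    (fun i => if h : (i : ℕ) < n - 1 then x' ⟨i, h⟩ else t)

/-- The first `n-1` coordinates of a point of `ℝⁿ`. -/
def xinit {n : ℕ} (x : EuclideanSpace ℝ (Fin n)) : EuclideanSpace ℝ (Fin (n - 1)) :=
  (WithLp.equiv 2 (Fin (n - 1) → ℝ)).symm
    (fun i => x ⟨(i : ℕ), Nat.lt_of_lt_of_le i.isLt (Nat.sub_le n 1)⟩)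

/-- The last coordinate of a point of `ℝⁿ`. -/
def xlast {n : ℕ} (x : EuclideanSpace ℝ (Fin n)) : ℝ :=
  if h : 0 < n then x ⟨n - 1, by omega⟩ else 0

/-- The upper half space `ℝⁿ₊`. -/
def upperHalfSpace (n : ℕ) : Set (EuclideanSpace ℝ (Fin n)) := {x | 0 < xlast x}

/-- The embedding `Fin (n-1) → Fin n`. -/
def finUp {n : ℕ} (i : Fin (n - 1)) : Fin n :=
  ⟨(i : ℕ), Nat.lt_of_lt_of_le i.isLt (Nat.sub_le n 1)⟩

/-- The last index of `Fin n`. -/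
def lastIdx (n : ℕ) (h : 0 < n) : Fin n := ⟨n - 1, by omega⟩

/-- Partial derivative along the `i`-th coordinate direction. -/
def pd {n : ℕ} {F : Type*} [NormedAddCommGroup F] [NormedSpace ℝ F]
    (i : Fin n) (u : EuclideanSpace ℝ (Fin n) → F) (x : EuclideanSpace ℝ (Fin n)) : F :=
  fderiv ℝ u x (EuclideanSpace.single i 1)

/-- Iterated mixed partial derivative along the string of coordinate directions `d`. -/
def mpd {n : ℕ} {F : Type*} [NormedAddCommGroup F] [NormedSpace ℝ F]
    (k : ℕ) (d : Fin k → Fin n) (u : EuclideanSpace ℝ (Fin n) → F)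
    (x : EuclideanSpace ℝ (Fin n)) : F :=
  iteratedFDeriv ℝ k u x (fun i => EuclideanSpace.single (d i) 1)

/-- The nontangential approach filter for the cone `Γ_κ(x')` (points written as `(y', t)`). -/
def ntFilter {n : ℕ} (κ : ℝ) (x' : EuclideanSpace ℝ (Fin (n - 1))) :
    Filter ((EuclideanSpace ℝ (Fin (n - 1))) × ℝ) :=
  (nhds (x', (0 : ℝ))) ⊓ Filter.principal {q | 0 < q.2 ∧ dist x' q.1 < κ * q.2}

/-- The nontangential maximal function (aperture `κ`) of `u : ℝⁿ → F`,
as an `ℝ≥0∞`-valued function on `ℝ^{n-1}`. -/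
def ntMax {n : ℕ} {F : Type*} [NormedAddCommGroup F] (κ : ℝ)
    (u : EuclideanSpace ℝ (Fin n) → F) (x' : EuclideanSpace ℝ (Fin (n - 1))) : ℝ≥0∞ :=
  ⨆ (y' : EuclideanSpace ℝ (Fin (n - 1))) (t : ℝ) (_ : 0 < t ∧ dist x' y' < κ * t),
    (‖u (toUp y' t)‖₊ : ℝ≥0∞)

/-- The `L^p` norm (`p ∈ (0,∞]`) of an `ℝ≥0∞`-valued function on `ℝ^m`. -/
def lpNormE {m : ℕ} (g : EuclideanSpace ℝ (Fin m) → ℝ≥0∞) (p : ℝ≥0∞) : ℝ≥0∞ :=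
  if p = ∞ then essSup g volume
  else (∫⁻ x', (g x') ^ p.toReal) ^ (1 / p.toReal)

/-- The Hardy–Littlewood maximal function. -/
def hlMax {m : ℕ} {F : Type*} [NormedAddCommGroup F]
    (f : EuclideanSpace ℝ (Fin m) → F) (x' : EuclideanSpace ℝ (Fin m)) : ℝ≥0∞ :=
  ⨆ (r : ℝ) (_ : 0 < r),
    (volume (ball x' r))⁻¹ * ∫⁻ y' in ball x' r, (‖f y'‖₊ : ℝ≥0∞)

/-- The Legendre-Hadamard ellipticity condition for the coefficient tensor `A`,
where `A r s α β` stands for `a^{αβ}_{rs}`. -/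
def LegendreHadamard {n M : ℕ} (A : Fin n → Fin n → Fin M → Fin M → ℂ) : Prop :=
  ∃ κ₀ : ℝ, 0 < κ₀ ∧ ∀ (ξ : Fin n → ℝ) (η : Fin M → ℂ),
    κ₀ * (∑ r, ξ r ^ 2) * (∑ a, ‖η a‖ ^ 2) ≤
      (∑ r, ∑ s, ∑ a, ∑ b, A r s a b * ξ r * ξ s * (starRingEnd ℂ) (η a) * η b).re

/-- `g` is the weak (distributional) mixed partial derivative of `f` of order `k`
along the string of directions `d`. -/
def IsWeakDeriv {m : ℕ} {F : Type*} [NormedAddCommGroup F] [NormedSpace ℝ F]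
    (k : ℕ) (d : Fin k → Fin m) (f g : EuclideanSpace ℝ (Fin m) → F) : Prop :=
  ∀ φ : EuclideanSpace ℝ (Fin m) → ℝ, ContDiff ℝ (⊤ : ℕ∞) φ → HasCompactSupport φ →
    ∫ x', (mpd k d φ x') • f x' = ((-1 : ℝ) ^ k) • ∫ x', φ x' • g x'

/-- The surface area `ω_{n-1}` of the unit sphere `S^{n-1}` in `ℝⁿ`. -/
def sphereArea (n : ℕ) : ℝ :=
  (n : ℝ) * (volume (ball (0 : EuclideanSpace ℝ (Fin n)) (1 : ℝ))).toReal

/-- The parabolic dilation `F_t(x') = t^{1-n} F(x'/t)` of a matrix-valued kernel. -/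
def matDil {n M : ℕ} (P : EuclideanSpace ℝ (Fin (n - 1)) → Matrix (Fin M) (Fin M) ℂ)
    (t : ℝ) (x' : EuclideanSpace ℝ (Fin (n - 1))) : Matrix (Fin M) (Fin M) ℂ :=
  (t ^ ((1 : ℤ) - (n : ℤ))) • P (t⁻¹ • x')

/-- The convolution `(P_t * f)(x')` of a dilated matrix kernel with a `ℂ^M`-valued function. -/
def matConv {n M : ℕ} (P : EuclideanSpace ℝ (Fin (n - 1)) → Matrix (Fin M) (Fin M) ℂ)
    (f : EuclideanSpace ℝ (Fin (n - 1)) → EuclideanSpace ℂ (Fin M))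
    (t : ℝ) (x' : EuclideanSpace ℝ (Fin (n - 1))) : EuclideanSpace ℂ (Fin M) :=
  (WithLp.equiv 2 (Fin M → ℂ)).symm
    (fun γ => ∫ y', ∑ α, matDil P t (x' - y') γ α * f y' α)

/-- A Poisson kernel for the system determined by the coefficient tensor `A`
(`A r s α β` stands for `a^{αβ}_{rs}`) in the upper half space: decay,
normalization, and the fact that each column of the dilated kernel
`K(x',t) = t^{1-n} P(x'/t)` is a distributional null solution of `L_A` in `ℝⁿ₊`. -/
def IsPoissonKernelFor (n M : ℕ) (A : Fin n → Fin n → Fin M → Fin M → ℂ)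
    (P : EuclideanSpace ℝ (Fin (n - 1)) → Matrix (Fin M) (Fin M) ℂ) : Prop :=
  (∀ α β : Fin M, Measurable fun x' => P x' α β) ∧
  (∃ C : ℝ, 0 < C ∧ ∀ x' : EuclideanSpace ℝ (Fin (n - 1)), ∀ α β : Fin M,
      ‖P x' α β‖ ≤ C * (1 + ‖x'‖ ^ 2) ^ (-(n : ℝ) / 2)) ∧
  (∀ α β : Fin M,
      (∫ x' : EuclideanSpace ℝ (Fin (n - 1)), P x' α β) = if α = β then 1 else 0) ∧
  (∀ φ : EuclideanSpace ℝ (Fin n) → EuclideanSpace ℂ (Fin M),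
      ContDiff ℝ (⊤ : ℕ∞) φ → HasCompactSupport φ → tsupport φ ⊆ upperHalfSpace n →
      ∀ β : Fin M,
        (∫ x in upperHalfSpace n,
            ∑ γ, ∑ α, ∑ r, ∑ s,
              matDil P (xlast x) (xinit x) γ β * A r s α γ *
                pd r (pd s (fun y => φ y α)) x) = 0)

/-!
The difference `k` of two columns with the same index has mean zero and decays like `‖x‖ ^ (-n)`
in dimension `n - 1`, and its extension `u(x', t) = t^{1-n} k(x'/t)` is a null solution of `L_A`.
A Fourier transform in `x'` turns `u` into `k̂(tξ)`. Tested against plane waves `e^{-i⟪p, x⟫} ψ(t)`,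
which are compactly supported in `t` only (dominated convergence permits this because `k` is
integrable), the system says that for every fixed `ξ ≠ 0` the bounded function `g(t) = k̂(tξ)`
solves on `(0, ∞)` a second order system of ordinary differential equations whose symbol is, by the
Legendre–Hadamard condition, coercive on the imaginary axis.

Since `k` has mean zero and a finite moment of order `s ∈ (1/2, 1)`, also `‖g(t)‖ ≤ D t ^ s`. By
Plancherel's theorem, coercivity yields a Caccioppoli inequality: `∫ χ² ‖g‖²` is at most a constant
times `∫ (|χ χ''| + χ'²) ‖g‖²` for every cutoff `χ` on `(0, ∞)`. For cutoffs to `[δ, 2/δ]` the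
right-hand side is `O(δ ^ (2 s - 1) + δ)`, where the first term comes from the decay of `g` near `0`
and the second from its boundedness near infinity. Letting `δ → 0` gives `g = 0`, so `k̂ = 0`.
-/

section L2

variable {α : Type*} {_ : MeasurableSpace α} {μ : Measure α}
  {H : Type*} [NormedAddCommGroup H] [InnerProductSpace ℂ H]

lemma integrable_inner {f g : α → H} (hf : MemLp f 2 μ) (hg : MemLp g 2 μ) :
    Integrable (fun x ↦ inner ℂ (f x) (g x)) μ := by
  refine (L2.integrable_inner (𝕜 := ℂ) hf.toLp hg.toLp).congr ?_
  filter_upwards [hf.coeFn_toLp, hg.coeFn_toLp] with x hfx hgx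
  rw [hfx, hgx]

end L2

section Fourier

open scoped FourierTransform SchwartzMap ComplexInnerProductSpace

variable {V : Type*} [NormedAddCommGroup V] [InnerProductSpace ℝ V] [FiniteDimensional ℝ V]
  [MeasurableSpace V] [BorelSpace V]
  {H : Type*} [NormedAddCommGroup H] [InnerProductSpace ℂ H]

lemma continuous_fourier {f : V → H} (hf : Integrable f) : Continuous (𝓕 f) :=
  VectorFourier.fourierIntegral_continuous continuous_fourierChar
    (by exact continuous_inner) hf

lemma norm_fourier_le_integral_norm (f : V → H) (w : V) : ‖𝓕 f w‖ ≤ ∫ x, ‖f x‖ :=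
  VectorFourier.norm_fourierIntegral_le_integral_norm _ _ _ _ _

variable [CompleteSpace H]

lemma fourier_continuousLinearMap_comp {H' : Type*} [NormedAddCommGroup H']
    [InnerProductSpace ℂ H'] [CompleteSpace H'] (a : H →L[ℂ] H') {f : V → H} (hf : Integrable f)
    (w : V) : 𝓕 (fun x ↦ a (f x)) w = a (𝓕 f w) := by
  rw [Real.fourier_eq, Real.fourier_eq,
    ← a.integral_comp_comm ((Real.fourierIntegral_convergent_iff w).2 hf)]
  simp only [Circle.smul_def, map_smul]

lemma ae_eq_of_integral_schwartzMap_smul_eq {f g : V → H}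
    (hf : LocallyIntegrable f) (hg : LocallyIntegrable g)
    (h : ∀ φ : 𝓢(V, ℂ), ∫ x, φ x • f x = ∫ x, φ x • g x) : f =ᵐ[volume] g := by
  refine ae_eq_of_integral_contDiff_smul_eq hf hg fun φ hφ hφc ↦ ?_
  have hφc' : HasCompactSupport fun x ↦ (φ x : ℂ) :=
    hφc.comp_left (g := fun r : ℝ ↦ (r : ℂ)) Complex.ofReal_zero
  simpa using! h (hφc'.toSchwartzMap (Complex.ofRealCLM.contDiff.comp hφ))

lemma integral_schwartzMap_smul_fourier {f : V → H} (hf : Integrable f) (φ : 𝓢(V, ℂ)) :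
    ∫ x, φ x • 𝓕 f x = ∫ x, 𝓕 φ x • f x := by
  simpa [SchwartzMap.fourier_coe] using!
    (VectorFourier.integral_fourierIntegral_smul_eq_flip (L := innerₗ V) (μ := volume)
      (ν := volume) continuous_fourierChar continuous_inner φ.integrable hf).symm

lemma ae_eq_of_fourier_eq {f g : V → H} (hf : Integrable f) (hg : Integrable g)
    (h : 𝓕 f = 𝓕 g) : f =ᵐ[volume] g := by
  refine ae_eq_of_integral_schwartzMap_smul_eq hf.locallyIntegrable hg.locallyIntegrable
    fun φ ↦ ?_
  rw [← FourierTransform.fourier_fourierInv_eq (F := 𝓢(V, ℂ)) φ,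
    ← integral_schwartzMap_smul_fourier hf, ← integral_schwartzMap_smul_fourier hg, h]

lemma coeFn_fourier_toLp_ae_eq {f : V → H} (hf : Integrable f) (hf₂ : MemLp f 2) :
    ((𝓕 hf₂.toLp : Lp H 2 (volume : Measure V)) : V → H) =ᵐ[volume] 𝓕 f := by
  have hloc : LocallyIntegrable ((𝓕 hf₂.toLp : Lp H 2 (volume : Measure V)) : V → H) :=
    (Lp.memLp _).locallyIntegrable one_le_two
  refine ae_eq_of_integral_schwartzMap_smul_eq hloc
    (continuous_fourier hf).locallyIntegrable fun φ ↦ ?_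
  have hpair := DFunLike.congr_fun (Lp.fourier_toTemperedDistribution_eq hf₂.toLp) φ
  rw [TemperedDistribution.fourier_apply, Lp.toTemperedDistribution_apply,
    Lp.toTemperedDistribution_apply] at hpair
  rw [← hpair, integral_schwartzMap_smul_fourier hf]
  refine integral_congr_ae ?_
  filter_upwards [hf₂.coeFn_toLp] with x hx
  rw [hx]

lemma memLp_two_fourier {f : V → H} (hf : Integrable f) (hf₂ : MemLp f 2) : MemLp (𝓕 f) 2 :=
  (memLp_congr_ae (coeFn_fourier_toLp_ae_eq hf hf₂)).1 (Lp.memLp _)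

theorem integral_inner_fourier_eq {f g : V → H} (hf : Integrable f) (hf₂ : MemLp f 2)
    (hg : Integrable g) (hg₂ : MemLp g 2) :
    ∫ ξ, ⟪𝓕 f ξ, 𝓕 g ξ⟫ = ∫ x, ⟪f x, g x⟫ := by
  have key := Lp.inner_fourier_eq hf₂.toLp hg₂.toLp
  rw [L2.inner_def, L2.inner_def] at key
  convert key using 1 <;> refine integral_congr_ae ?_
  · filter_upwards [coeFn_fourier_toLp_ae_eq hf hf₂, coeFn_fourier_toLp_ae_eq hg hg₂]
      with ξ hfξ hgξ
    rw [hfξ, hgξ]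
  · filter_upwards [hf₂.coeFn_toLp, hg₂.coeFn_toLp] with x hfx hgx
    rw [hfx, hgx]

lemma integral_norm_sq_fourier_eq {f : V → H} (hf : Integrable f) (hf₂ : MemLp f 2) :
    ∫ ξ, ‖𝓕 f ξ‖ ^ 2 = ∫ x, ‖f x‖ ^ 2 := by
  have key := integral_inner_fourier_eq hf hf₂ hf hf₂
  simp only [inner_self_eq_norm_sq_to_K] at key
  exact_mod_cast key

end Fourier

section FourierDecay

open scoped FourierTransform

variable {V : Type*} [NormedAddCommGroup V] [InnerProductSpace ℝ V]

lemma norm_cexp_ofReal_mul_I_sub_one_le (x : ℝ) {s : ℝ} (hs₀ : 0 ≤ s) (hs₁ : s ≤ 1) :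
    ‖Complex.exp (x * Complex.I) - 1‖ ≤ 2 * |x| ^ s := by
  rcases le_total |x| 1 with h | h
  · calc ‖Complex.exp (x * Complex.I) - 1‖ ≤ |x| := by
          rw [mul_comm]
          exact norm_exp_I_mul_ofReal_sub_one_le
      _ ≤ |x| ^ s := self_le_rpow_of_le_one (abs_nonneg x) h hs₁
      _ ≤ 2 * |x| ^ s := le_mul_of_one_le_left (by positivity) one_le_two
  · calc ‖Complex.exp (x * Complex.I) - 1‖ ≤ ‖Complex.exp (x * Complex.I)‖ + ‖(1 : ℂ)‖ :=
          norm_sub_le _ _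
      _ = 2 * 1 := by rw [Complex.norm_exp_ofReal_mul_I, norm_one]; norm_num
      _ ≤ 2 * |x| ^ s := by gcongr; exact one_le_rpow h hs₀

variable [FiniteDimensional ℝ V] [MeasurableSpace V] [BorelSpace V]

lemma integrable_of_norm_le_rpow_one_add_norm_sq {E : Type*} [NormedAddCommGroup E] {f : V → E}
    {C r : ℝ} (hfm : AEStronglyMeasurable f) (hr : Module.finrank ℝ V < r)
    (hf : ∀ x, ‖f x‖ ≤ C * (1 + ‖x‖ ^ 2) ^ (-r / 2)) : Integrable f :=
  ((integrable_rpow_neg_one_add_norm_sq hr).const_mul C).mono' hfm (.of_forall hf)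

lemma integrable_norm_rpow_mul_norm {E : Type*} [NormedAddCommGroup E] {f : V → E}
    {C r s : ℝ} (hfm : AEStronglyMeasurable f) (hs : 0 ≤ s) (hr : Module.finrank ℝ V < r - s)
    (hf : ∀ x, ‖f x‖ ≤ C * (1 + ‖x‖ ^ 2) ^ (-r / 2)) : Integrable fun x ↦ ‖x‖ ^ s * ‖f x‖ := by
  refine integrable_of_norm_le_rpow_one_add_norm_sq (C := C) (r := r - s)
    ((continuous_norm.rpow_const fun _ ↦ .inr hs).aestronglyMeasurable.mul hfm.norm) hr fun x ↦ ?_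
  have hx : ‖x‖ ^ s ≤ (1 + ‖x‖ ^ 2) ^ (s / 2) := by
    calc ‖x‖ ^ s = (‖x‖ ^ 2) ^ (s / 2) := by
          rw [← rpow_natCast_mul (norm_nonneg x)]
          congr 1
          push_cast
          ring
      _ ≤ (1 + ‖x‖ ^ 2) ^ (s / 2) := by gcongr; linarith
  calc ‖‖x‖ ^ s * ‖f x‖‖ = ‖x‖ ^ s * ‖f x‖ := norm_of_nonneg (by positivity)
    _ ≤ (1 + ‖x‖ ^ 2) ^ (s / 2) * (C * (1 + ‖x‖ ^ 2) ^ (-r / 2)) := by gcongr; exact hf x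
    _ = C * (1 + ‖x‖ ^ 2) ^ (-(r - s) / 2) := by
        rw [mul_left_comm, ← rpow_add (by positivity)]
        ring_nf

variable {H : Type*} [NormedAddCommGroup H] [InnerProductSpace ℂ H]

lemma fourier_zero_eq_integral (f : V → H) : 𝓕 f 0 = ∫ x, f x := by
  simp [Real.fourier_eq]

lemma norm_fourier_le_of_integral_eq_zero {f : V → H} (hf : Integrable f) (hf₀ : ∫ x, f x = 0)
    {s : ℝ} (hs₀ : 0 ≤ s) (hs₁ : s ≤ 1) (hfs : Integrable fun x ↦ ‖x‖ ^ s * ‖f x‖) (w : V) :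
    ‖𝓕 f w‖ ≤ (2 * (2 * π) ^ s * ∫ x, ‖x‖ ^ s * ‖f x‖) * ‖w‖ ^ s := by
  have hconv : Integrable fun x ↦ Complex.exp ((-2 * π * inner ℝ x w : ℝ) * Complex.I) • f x := by
    simpa [Circle.smul_def, fourierChar_apply] using (Real.fourierIntegral_convergent_iff w).2 hf
  have hsub : 𝓕 f w =
      ∫ x, (Complex.exp ((-2 * π * inner ℝ x w : ℝ) * Complex.I) - 1) • f x := by
    simp only [sub_smul, one_smul]
    rw [integral_sub hconv hf, hf₀, sub_zero, Real.fourier_eq']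
  have hbound : ∀ x, ‖(Complex.exp ((-2 * π * inner ℝ x w : ℝ) * Complex.I) - 1) • f x‖ ≤
      2 * (2 * π) ^ s * ‖w‖ ^ s * (‖x‖ ^ s * ‖f x‖) := fun x ↦ by
    have habs : |-2 * π * inner ℝ x w| ≤ 2 * π * (‖x‖ * ‖w‖) := by
      rw [abs_mul, abs_mul, abs_neg, abs_two, abs_of_pos pi_pos]
      gcongr
      exact abs_real_inner_le_norm x w
    calc _ ≤ 2 * |-2 * π * inner ℝ x w| ^ s * ‖f x‖ := by
          rw [norm_smul]
          gcongr
          exact norm_cexp_ofReal_mul_I_sub_one_le _ hs₀ hs₁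
      _ ≤ 2 * (2 * π * (‖x‖ * ‖w‖)) ^ s * ‖f x‖ := by gcongr
      _ = _ := by
          rw [mul_rpow two_pi_pos.le (by positivity), mul_rpow (norm_nonneg x) (norm_nonneg w)]
          ring
  rw [hsub]
  refine (norm_integral_le_of_norm_le (hfs.const_mul _) (.of_forall hbound)).trans_eq ?_
  rw [integral_const_mul]
  ring

end FourierDecay

section Dilate

open scoped FourierTransform

variable {V : Type*} [NormedAddCommGroup V] [InnerProductSpace ℝ V]
  {E : Type*} [NormedAddCommGroup E]

/-- The `L¹`-normalised dilation `k_t(x) = t^{-d} k(x / t)`, where `d` is the dimension. -/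
def dilate [NormedSpace ℝ E] (k : V → E) (t : ℝ) (x : V) : E :=
  (t ^ Module.finrank ℝ V)⁻¹ • k (t⁻¹ • x)

variable [FiniteDimensional ℝ V] [MeasurableSpace V] [BorelSpace V]

section Real

variable [NormedSpace ℝ E] {k : V → E} {t : ℝ}

lemma stronglyMeasurable_uncurry_dilate (hk : StronglyMeasurable k) :
    StronglyMeasurable fun p : V × ℝ ↦ dilate k p.2 p.1 :=
  StronglyMeasurable.smul (by fun_prop)
    (hk.comp_measurable (measurable_snd.inv.smul measurable_fst))

lemma integrable_dilate (hk : Integrable k) (ht : 0 < t) : Integrable (dilate k t) :=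
  ((integrable_comp_smul_iff volume k (inv_ne_zero ht.ne')).2 hk).smul _

lemma integral_norm_dilate (k : V → E) (ht : 0 < t) : ∫ x, ‖dilate k t x‖ = ∫ x, ‖k x‖ := by
  have hpow : 0 < t ^ Module.finrank ℝ V := by positivity
  simp only [dilate, norm_smul, norm_inv, norm_of_nonneg hpow.le]
  rw [integral_const_mul, Measure.integral_comp_inv_smul_of_nonneg volume (fun x ↦ ‖k x‖) ht.le,
    smul_eq_mul, inv_mul_cancel_left₀ hpow.ne']

lemma integrable_mul_norm_dilate (hk : StronglyMeasurable k) (hki : Integrable k) {ρ : ℝ → ℝ}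
    (hρ : IntegrableOn ρ (Set.Ioi 0)) :
    Integrable (fun p : V × ℝ ↦ ρ p.2 * ‖dilate k p.2 p.1‖)
      ((volume : Measure V).prod (volume.restrict (Set.Ioi 0))) := by
  refine (integrable_prod_iff' ?_).2 ⟨?_, ?_⟩
  · exact (hρ.1.comp_snd).mul (stronglyMeasurable_uncurry_dilate hk).norm.aestronglyMeasurable
  · filter_upwards [ae_restrict_mem measurableSet_Ioi] with t ht
    exact (integrable_dilate hki ht).norm.const_mul _
  · refine (hρ.norm.mul_const (∫ x, ‖k x‖)).congr ?_
    filter_upwards [ae_restrict_mem measurableSet_Ioi] with t ht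
    simp only [norm_mul, norm_norm, integral_const_mul]
    rw [integral_norm_dilate k ht]

end Real

lemma fourier_dilate {H : Type*} [NormedAddCommGroup H] [InnerProductSpace ℂ H] (k : V → H)
    {t : ℝ} (ht : 0 < t) (ξ : V) : 𝓕 (dilate k t) ξ = 𝓕 k (t • ξ) := by
  have hpow : t ^ Module.finrank ℝ V ≠ 0 := by positivity
  have hint := Measure.integral_comp_inv_smul_of_nonneg volume
    (fun x ↦ fourierChar (-inner ℝ x (t • ξ)) • k x) ht.le
  rw [Real.fourier_eq, Real.fourier_eq, ← (inv_smul_eq_iff₀ hpow).2 hint, ← integral_smul]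
  congr 1 with x
  rw [dilate, smul_comm, inner_smul_right, real_inner_smul_left, mul_inv_cancel_left₀ ht.ne']

end Dilate

section Ode

open scoped FourierTransform ContDiff ComplexInnerProductSpace

variable {H : Type*} [NormedAddCommGroup H] [InnerProductSpace ℂ H]

/-- The symbol `z² a + z b + c` of the differential operator `a D² + b D + c`. -/
def odeSymbol (a b c : H →L[ℂ] H) (z : ℂ) : H →L[ℂ] H := z ^ 2 • a + z • b + c

/-- Coercivity, with constant `κ`, of the symbol of `-(a D² + b D + c)` at purely imaginary
arguments. -/
def IsCoerciveOde (κ : ℝ) (a b c : H →L[ℂ] H) : Prop :=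
  ∀ (σ : ℝ) (η : H),
    κ * (1 + σ ^ 2) * ‖η‖ ^ 2 ≤ -(⟪η, odeSymbol a b c (σ * Complex.I) η⟫).re

/-- `g` solves `a g'' + b g' + c g = 0` in the sense of distributions on `(0, ∞)`. The tests are
complex-valued so that exponentials may be used. -/
def IsWeakOdeSolution (a b c : H →L[ℂ] H) (g : ℝ → H) : Prop :=
  ∀ ψ : ℝ → ℂ, ContDiff ℝ ∞ ψ → HasCompactSupport ψ → tsupport ψ ⊆ Set.Ioi 0 →
    ∫ t, (deriv (deriv ψ) t • a (g t) - deriv ψ t • b (g t) + ψ t • c (g t)) = 0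

variable {a b c : H →L[ℂ] H} {g : ℝ → H} {κ : ℝ}

lemma deriv_mul_cexp_neg {f : ℝ → ℂ} (hf : Differentiable ℝ f) (z : ℂ) :
    deriv (fun t : ℝ ↦ f t * Complex.exp (-(z * t))) =
      fun t ↦ (deriv f t - z * f t) * Complex.exp (-(z * t)) := by
  ext t
  have hlin : HasDerivAt (fun t : ℝ ↦ -(z * t)) (-(z * 1)) t :=
    ((hasDerivAt_id t).ofReal_comp.const_mul z).neg
  rw [((hf t).hasDerivAt.fun_mul hlin.cexp).deriv]
  ring

lemma deriv_deriv_mul_cexp_neg {f : ℝ → ℂ} (hf : ContDiff ℝ ∞ f) (z : ℂ) :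
    deriv (deriv fun t : ℝ ↦ f t * Complex.exp (-(z * t))) =
      fun t ↦ (deriv (deriv f) t - 2 * z * deriv f t + z ^ 2 * f t) *
        Complex.exp (-(z * t)) := by
  have hf0 : Differentiable ℝ f := hf.differentiable (by simp)
  have hf1 : Differentiable ℝ (deriv f) :=
    (contDiff_infty_iff_deriv.1 hf).2.differentiable (by simp)
  rw [deriv_mul_cexp_neg hf0, deriv_mul_cexp_neg (hf1.fun_sub (hf0.const_mul z))]
  ext t
  rw [deriv_fun_sub (hf1 t) ((hf0 t).const_mul z), deriv_const_mul_field]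
  ring

lemma deriv_ofReal_comp {χ : ℝ → ℝ} (hχ : Differentiable ℝ χ) :
    deriv (fun t ↦ (χ t : ℂ)) = fun t ↦ ((deriv χ t : ℝ) : ℂ) :=
  funext fun t ↦ (hχ t).hasDerivAt.ofReal_comp.deriv

lemma IsCoerciveOde.half_norm_sq_le (hκ : 0 < κ) (hcoer : IsCoerciveOde κ a b c) {σ : ℝ}
    {w v r : H} (heq : odeSymbol a b c (σ * Complex.I) w =
      (2 * (σ * Complex.I)) • a v + b v - a r) :
    κ / 2 * ‖w‖ ^ 2 ≤
      (⟪w, a r⟫).re + (‖a‖ ^ 2 / κ + ‖b‖ ^ 2 / (2 * κ)) * ‖v‖ ^ 2 := by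
  have hσ := hcoer σ w
  have hav : -(⟪w, (2 * (σ * Complex.I)) • a v⟫).re ≤ 2 * |σ| * (‖w‖ * (‖a‖ * ‖v‖)) := by
    calc _ ≤ ‖⟪w, (2 * (σ * Complex.I)) • a v⟫‖ := (neg_le_abs _).trans (Complex.abs_re_le_norm _)
      _ = 2 * |σ| * ‖⟪w, a v⟫‖ := by simp
      _ ≤ _ := by gcongr; exact (norm_inner_le_norm _ _).trans (by gcongr; exact a.le_opNorm v)
  have hbv : -(⟪w, b v⟫).re ≤ ‖w‖ * (‖b‖ * ‖v‖) :=
    calc _ ≤ ‖⟪w, b v⟫‖ := (neg_le_abs _).trans (Complex.abs_re_le_norm _)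
      _ ≤ _ := (norm_inner_le_norm _ _).trans (by gcongr; exact b.le_opNorm v)
  rw [heq, inner_sub_right, inner_add_right, Complex.sub_re, Complex.add_re] at hσ
  have young_a : 2 * |σ| * (‖w‖ * (‖a‖ * ‖v‖)) ≤ κ * σ ^ 2 * ‖w‖ ^ 2 + ‖a‖ ^ 2 / κ * ‖v‖ ^ 2 := by
    have := div_nonneg (sq_nonneg (κ * |σ| * ‖w‖ - ‖a‖ * ‖v‖)) hκ.le
    rw [← sq_abs σ]
    field_simp at this ⊢
    linarith
  have young_b : ‖w‖ * (‖b‖ * ‖v‖) ≤ κ / 2 * ‖w‖ ^ 2 + ‖b‖ ^ 2 / (2 * κ) * ‖v‖ ^ 2 := by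
    have := div_nonneg (sq_nonneg (κ * ‖w‖ - ‖b‖ * ‖v‖)) hκ.le
    field_simp at this ⊢
    linarith
  linarith

lemma fourier_eq_integral_cexp_smul (f : ℝ → H) (τ : ℝ) :
    𝓕 f τ = ∫ t : ℝ, Complex.exp (-(((2 * π * τ : ℝ) * Complex.I) * t)) • f t := by
  rw [fourier_real_eq_integral_exp_smul]
  congr 1 with t
  congr 2
  push_cast
  ring

lemma integrable_cexp_smul {f : ℝ → H} (hf : Integrable f) (τ : ℝ) :
    Integrable fun t : ℝ ↦ Complex.exp (-(((2 * π * τ : ℝ) * Complex.I) * t)) • f t := by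
  refine (integrable_norm_iff ?_).1 ?_
  · exact AEStronglyMeasurable.smul (by fun_prop) hf.1
  · simpa [norm_smul, Complex.norm_exp] using hf.norm

lemma IsWeakOdeSolution.integral_cexp_eq_zero (hsol : IsWeakOdeSolution a b c g) {χ : ℝ → ℝ}
    (hχ : ContDiff ℝ ∞ χ) (hχc : HasCompactSupport χ) (hχ0 : tsupport χ ⊆ Set.Ioi 0) (z : ℂ) :
    ∫ t : ℝ, (odeSymbol a b c z (Complex.exp (-(z * t)) • χ t • g t) +
      a (Complex.exp (-(z * t)) • deriv (deriv χ) t • g t) -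
      ((2 * z) • a + b) (Complex.exp (-(z * t)) • deriv χ t • g t)) = 0 := by
  have hχ' := (contDiff_infty_iff_deriv.1 hχ).2
  have hχℂ : ContDiff ℝ ∞ fun t ↦ (χ t : ℂ) := Complex.ofRealCLM.contDiff.comp hχ
  have hweak := hsol (fun t ↦ χ t * Complex.exp (-(z * t)))
    (hχℂ.mul (contDiff_const.mul Complex.ofRealCLM.contDiff).neg.cexp)
    (HasCompactSupport.mul_right (hχc.comp_left (g := fun x : ℝ ↦ (x : ℂ)) Complex.ofReal_zero))
    (tsupport_mul_subset_left.trans ((tsupport_comp_subset Complex.ofReal_zero χ).trans hχ0))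
  rw [deriv_deriv_mul_cexp_neg hχℂ, deriv_mul_cexp_neg (hχℂ.differentiable (by simp)),
    deriv_ofReal_comp (hχ.differentiable (by simp)),
    deriv_ofReal_comp (hχ'.differentiable (by simp))] at hweak
  rw [← hweak]
  congr 1 with t
  simp only [odeSymbol, ← Complex.coe_smul, add_apply, smul_apply, map_smul]
  module

lemma norm_integral_inner_smul_le {χ ρ : ℝ → ℝ}
    (hint : Integrable fun t ↦ |χ t * ρ t| * ‖g t‖ ^ 2) :
    ‖∫ t, ⟪χ t • g t, a (ρ t • g t)⟫‖ ≤ ‖a‖ * ∫ t, |χ t * ρ t| * ‖g t‖ ^ 2 := by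
  rw [← integral_const_mul]
  refine norm_integral_le_of_norm_le (hint.const_mul _) (.of_forall fun t ↦ ?_)
  calc _ ≤ ‖χ t • g t‖ * (‖a‖ * ‖ρ t • g t‖) :=
        (norm_inner_le_norm _ _).trans (by gcongr; exact a.le_opNorm _)
    _ = _ := by simp only [norm_smul, norm_eq_abs, abs_mul]; ring

variable [CompleteSpace H]

lemma IsWeakOdeSolution.odeSymbol_fourier (hg : Continuous g) (hsol : IsWeakOdeSolution a b c g)
    {χ : ℝ → ℝ} (hχ : ContDiff ℝ ∞ χ) (hχc : HasCompactSupport χ) (hχ0 : tsupport χ ⊆ Set.Ioi 0)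
    (τ : ℝ) :
    odeSymbol a b c ((2 * π * τ : ℝ) * Complex.I) (𝓕 (fun t ↦ χ t • g t) τ) =
      (2 * ((2 * π * τ : ℝ) * Complex.I)) • a (𝓕 (fun t ↦ deriv χ t • g t) τ) +
        b (𝓕 (fun t ↦ deriv χ t • g t) τ) - a (𝓕 (fun t ↦ deriv (deriv χ) t • g t) τ) := by
  have hχ' := (contDiff_infty_iff_deriv.1 hχ).2
  have hχ'' := (contDiff_infty_iff_deriv.1 hχ').2
  have hint : ∀ f : ℝ → ℝ, ContDiff ℝ ∞ f → HasCompactSupport f → Integrable fun t ↦ f t • g t :=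
    fun f hf hfc ↦ (hf.continuous.smul hg).integrable_of_hasCompactSupport hfc.smul_right
  have hw := integrable_cexp_smul (hint χ hχ hχc) τ
  have hv := integrable_cexp_smul (hint _ hχ' hχc.deriv) τ
  have hr := integrable_cexp_smul (hint _ hχ'' hχc.deriv.deriv) τ
  simp only [fourier_eq_integral_cexp_smul]
  set z : ℂ := (2 * π * τ : ℝ) * Complex.I
  have hzero := hsol.integral_cexp_eq_zero hχ hχc hχ0 z
  rw [integral_sub (f := fun t : ℝ ↦ _ + _)
      (((odeSymbol a b c z).integrable_comp hw).add (a.integrable_comp hr))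
      (((2 * z) • a + b).integrable_comp hv),
    integral_add ((odeSymbol a b c z).integrable_comp hw) (a.integrable_comp hr),
    ContinuousLinearMap.integral_comp_comm _ hw, ContinuousLinearMap.integral_comp_comm _ hr,
    ContinuousLinearMap.integral_comp_comm _ hv, sub_eq_zero] at hzero
  exact eq_sub_of_add_eq hzero

lemma IsCoerciveOde.half_integral_norm_sq_le (hκ : 0 < κ) (hcoer : IsCoerciveOde κ a b c)
    {w v r : ℝ → H} (hw : Integrable w) (hw₂ : MemLp w 2) (hv : Integrable v) (hv₂ : MemLp v 2)
    (hr : Integrable r) (hr₂ : MemLp r 2)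
    (heq : ∀ τ : ℝ, odeSymbol a b c ((2 * π * τ : ℝ) * Complex.I) (𝓕 w τ) =
      (2 * ((2 * π * τ : ℝ) * Complex.I)) • a (𝓕 v τ) + b (𝓕 v τ) - a (𝓕 r τ)) :
    κ / 2 * ∫ t, ‖w t‖ ^ 2 ≤ (∫ t, ⟪w t, a (r t)⟫).re +
      (‖a‖ ^ 2 / κ + ‖b‖ ^ 2 / (2 * κ)) * ∫ t, ‖v t‖ ^ 2 := by
  have har : Integrable fun t ↦ a (r t) := a.integrable_comp hr
  have har₂ : MemLp (fun t ↦ a (r t)) 2 := a.comp_memLp' hr₂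
  have hwF := memLp_two_fourier hw hw₂
  have hvF := memLp_two_fourier hv hv₂
  have harF := memLp_two_fourier har har₂
  rw [← integral_norm_sq_fourier_eq hw hw₂, ← integral_norm_sq_fourier_eq hv hv₂,
    ← integral_inner_fourier_eq hw hw₂ har har₂, ← integral_const_mul, ← integral_const_mul,
    ← Complex.reCLM_apply, ← Complex.reCLM.integral_comp_comm (integrable_inner hwF harF),
    ← integral_add (Complex.reCLM.integrable_comp (integrable_inner hwF harF))
      ((hvF.integrable_norm_pow two_ne_zero).const_mul _)]
  refine integral_mono ((hwF.integrable_norm_pow two_ne_zero).const_mul _)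
    ((Complex.reCLM.integrable_comp (integrable_inner hwF harF)).add
      ((hvF.integrable_norm_pow two_ne_zero).const_mul _)) fun τ ↦ ?_
  simpa only [Complex.reCLM_apply, fourier_continuousLinearMap_comp a hr] using
    hcoer.half_norm_sq_le hκ (heq τ)

lemma IsWeakOdeSolution.half_integral_norm_cutoff_smul_sq_le (hκ : 0 < κ)
    (hcoer : IsCoerciveOde κ a b c) (hg : Continuous g) (hsol : IsWeakOdeSolution a b c g)
    {χ : ℝ → ℝ} (hχ : ContDiff ℝ ∞ χ) (hχc : HasCompactSupport χ) (hχ0 : tsupport χ ⊆ Set.Ioi 0) :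
    κ / 2 * ∫ t, ‖χ t • g t‖ ^ 2 ≤ (∫ t, ⟪χ t • g t, a (deriv (deriv χ) t • g t)⟫).re +
      (‖a‖ ^ 2 / κ + ‖b‖ ^ 2 / (2 * κ)) * ∫ t, ‖deriv χ t • g t‖ ^ 2 := by
  have hχ' := (contDiff_infty_iff_deriv.1 hχ).2
  have hχ'' := (contDiff_infty_iff_deriv.1 hχ').2
  have hint (f : ℝ → ℝ) (hf : ContDiff ℝ ∞ f) (hfc : HasCompactSupport f) :
      Integrable (fun t ↦ f t • g t) ∧ MemLp (fun t ↦ f t • g t) 2 :=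
    have hfg : Continuous fun t ↦ f t • g t := hf.continuous.smul hg
    ⟨hfg.integrable_of_hasCompactSupport hfc.smul_right,
      hfg.memLp_of_hasCompactSupport hfc.smul_right⟩
  obtain ⟨hw, hw₂⟩ := hint χ hχ hχc
  obtain ⟨hv, hv₂⟩ := hint _ hχ' hχc.deriv
  obtain ⟨hr, hr₂⟩ := hint _ hχ'' hχc.deriv.deriv
  exact hcoer.half_integral_norm_sq_le hκ hw hw₂ hv hv₂ hr hr₂
    (hsol.odeSymbol_fourier hg hχ hχc hχ0)

/-- The density which a cutoff `χ` contributes to the right-hand side of Caccioppoli's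
inequality. -/
def cutoffEnergy (χ : ℝ → ℝ) (t : ℝ) : ℝ := |χ t * deriv (deriv χ) t| + deriv χ t ^ 2

theorem IsWeakOdeSolution.caccioppoli_inequality (hκ : 0 < κ) (hcoer : IsCoerciveOde κ a b c)
    (hg : Continuous g) (hsol : IsWeakOdeSolution a b c g)
    {χ : ℝ → ℝ} (hχ : ContDiff ℝ ∞ χ) (hχc : HasCompactSupport χ)
    (hχ0 : tsupport χ ⊆ Set.Ioi 0) :
    κ / 2 * ∫ t, χ t ^ 2 * ‖g t‖ ^ 2 ≤ (‖a‖ + (‖a‖ ^ 2 / κ + ‖b‖ ^ 2 / (2 * κ))) *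
      ∫ t, cutoffEnergy χ t * ‖g t‖ ^ 2 := by
  have hχ' := (contDiff_infty_iff_deriv.1 hχ).2
  have hχ'' := (contDiff_infty_iff_deriv.1 hχ').2
  have hpar := hsol.half_integral_norm_cutoff_smul_sq_le hκ hcoer hg hχ hχc hχ0
  have hint : ∀ f : ℝ → ℝ, Continuous f → HasCompactSupport f →
      Integrable fun t ↦ f t * ‖g t‖ ^ 2 := fun f hf hfc ↦
    (hf.mul (hg.norm.pow 2)).integrable_of_hasCompactSupport hfc.mul_right
  have hint₁ := hint (fun t ↦ |χ t * deriv (deriv χ) t|) (hχ.continuous.mul hχ''.continuous).abs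
    (hχc.mul_right (f' := deriv (deriv χ))).norm
  have hint₂ := hint (fun t ↦ deriv χ t ^ 2) (hχ'.continuous.pow 2)
    (hχc.deriv.comp_left (g := (· ^ 2)) (zero_pow two_ne_zero))
  have hinner := (Complex.re_le_norm _).trans (norm_integral_inner_smul_le (a := a) hint₁)
  have hnonneg : 0 ≤ ‖a‖ ^ 2 / κ + ‖b‖ ^ 2 / (2 * κ) := by positivity
  simp only [norm_smul, mul_pow, norm_eq_abs, sq_abs] at hpar
  simp only [cutoffEnergy, add_mul (|_|)]
  rw [integral_add hint₁ hint₂]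
  have h₁ : 0 ≤ ∫ t, |χ t * deriv (deriv χ) t| * ‖g t‖ ^ 2 :=
    integral_nonneg fun t ↦ by positivity
  have h₂ : 0 ≤ ∫ t, deriv χ t ^ 2 * ‖g t‖ ^ 2 := integral_nonneg fun t ↦ by positivity
  nlinarith [mul_nonneg hnonneg h₁, mul_nonneg (norm_nonneg a) h₂]

end Ode

section Cutoff

open scoped ContDiff

lemma cutoffEnergy_nonneg (χ : ℝ → ℝ) (t : ℝ) : 0 ≤ cutoffEnergy χ t := by
  unfold cutoffEnergy
  positivity

lemma continuous_cutoffEnergy {χ : ℝ → ℝ} (hχ : ContDiff ℝ ∞ χ) : Continuous (cutoffEnergy χ) := by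
  have hχ' := (contDiff_infty_iff_deriv.1 hχ).2
  exact (hχ.continuous.mul (hχ'.continuous_deriv (by simp))).abs.add (hχ'.continuous.pow 2)

lemma abs_mul_add_sq_le_of_abs_le_one {x x' x'' y y' y'' : ℝ} (hx : |x| ≤ 1) (hy : |y| ≤ 1) :
    |x * y * (x'' * y + 2 * (x' * y') + x * y'')| + (x' * y + x * y') ^ 2 ≤
      3 * ((|x * x''| + x' ^ 2) + (|y * y''| + y' ^ 2)) := by
  have hx₂ : x ^ 2 ≤ 1 := (sq_le_one_iff_abs_le_one _).2 hx
  have hy₂ : y ^ 2 ≤ 1 := (sq_le_one_iff_abs_le_one _).2 hy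
  have hxy : |x * y| ≤ 1 := by
    rw [abs_mul]
    exact mul_le_one₀ hx (abs_nonneg _) hy
  have hcross : |x * y * (2 * (x' * y'))| ≤ x' ^ 2 + y' ^ 2 := by
    rw [abs_mul]
    refine (mul_le_of_le_one_left (abs_nonneg _) hxy).trans (abs_le.2 ⟨?_, ?_⟩) <;>
      nlinarith [sq_nonneg (x' + y'), sq_nonneg (x' - y')]
  have hxx : |x * x'' * y ^ 2| ≤ |x * x''| := by
    rw [abs_mul _ (y ^ 2), abs_of_nonneg (sq_nonneg y)]
    exact mul_le_of_le_one_right (abs_nonneg _) hy₂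
  have hyy : |y * y'' * x ^ 2| ≤ |y * y''| := by
    rw [abs_mul _ (x ^ 2), abs_of_nonneg (sq_nonneg x)]
    exact mul_le_of_le_one_right (abs_nonneg _) hx₂
  have hsecond : |x * y * (x'' * y + 2 * (x' * y') + x * y'')| ≤
      |x * x''| + (x' ^ 2 + y' ^ 2) + |y * y''| := by
    rw [show x * y * (x'' * y + 2 * (x' * y') + x * y'') =
      x * x'' * y ^ 2 + x * y * (2 * (x' * y')) + y * y'' * x ^ 2 by ring]
    exact (abs_add_three _ _ _).trans (by gcongr)
  have hfirst : (x' * y + x * y') ^ 2 ≤ 2 * (x' ^ 2 + y' ^ 2) := by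
    nlinarith [sq_nonneg (x' * y - x * y'), mul_nonneg (sq_nonneg x') (sub_nonneg.2 hy₂),
      mul_nonneg (sq_nonneg y') (sub_nonneg.2 hx₂)]
  linarith [abs_nonneg (x * x''), abs_nonneg (y * y'')]

lemma cutoffEnergy_mul_le {f h : ℝ → ℝ} (hf : ContDiff ℝ ∞ f) (hh : ContDiff ℝ ∞ h)
    (hf₁ : ∀ t, |f t| ≤ 1) (hh₁ : ∀ t, |h t| ≤ 1) (t : ℝ) :
    cutoffEnergy (fun t ↦ f t * h t) t ≤ 3 * (cutoffEnergy f t + cutoffEnergy h t) := by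
  have hdf : Differentiable ℝ f := hf.differentiable (by simp)
  have hdh : Differentiable ℝ h := hh.differentiable (by simp)
  have hdf' : Differentiable ℝ (deriv f) :=
    (contDiff_infty_iff_deriv.1 hf).2.differentiable (by simp)
  have hdh' : Differentiable ℝ (deriv h) :=
    (contDiff_infty_iff_deriv.1 hh).2.differentiable (by simp)
  have hderiv : deriv (fun t ↦ f t * h t) = fun t ↦ deriv f t * h t + f t * deriv h t :=
    funext fun t ↦ deriv_fun_mul (hdf t) (hdh t)
  have hderiv₂ : deriv (deriv fun t ↦ f t * h t) t =
      deriv (deriv f) t * h t + 2 * (deriv f t * deriv h t) + f t * deriv (deriv h) t := by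
    rw [hderiv, deriv_fun_add ((hdf' t).fun_mul (hdh t)) ((hdf t).fun_mul (hdh' t)),
      deriv_fun_mul (hdf' t) (hdh t), deriv_fun_mul (hdf t) (hdh' t)]
    ring
  rw [cutoffEnergy, hderiv₂, hderiv]
  exact abs_mul_add_sq_le_of_abs_le_one (hf₁ t) (hh₁ t)

lemma cutoffEnergy_comp_mul_add (χ : ℝ → ℝ) (r c t : ℝ) :
    cutoffEnergy (fun t ↦ χ (r * t + c)) t = r ^ 2 * cutoffEnergy χ (r * t + c) := by
  have hderiv : ∀ f : ℝ → ℝ, deriv (fun t ↦ f (r * t + c)) = fun t ↦ r * deriv f (r * t + c) :=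
    fun f ↦ funext fun t ↦ by
      rw [deriv_comp_mul_left r (fun t ↦ f (t + c)), deriv_comp_add_const, smul_eq_mul]
  have hderiv₂ : deriv (deriv fun t ↦ χ (r * t + c)) t = r * (r * deriv (deriv χ) (r * t + c)) := by
    rw [hderiv, deriv_const_mul_field, hderiv]
  rw [cutoffEnergy, hderiv₂, hderiv, ← mul_assoc r r, mul_left_comm, abs_mul (r * r),
    abs_mul_self, cutoffEnergy]
  ring

lemma cutoffEnergy_eq_zero_of_eventuallyEq_const {χ : ℝ → ℝ} {c t : ℝ}
    (h : χ =ᶠ[𝓝 t] fun _ ↦ c) : cutoffEnergy χ t = 0 := by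
  simp [cutoffEnergy, h.deriv.deriv_eq, h.deriv_eq]

lemma exists_cutoffEnergy_smoothTransition_le :
    ∃ B : ℝ, ∀ t, cutoffEnergy smoothTransition t ≤ (Set.Icc 0 1).indicator (fun _ ↦ B) t := by
  obtain ⟨B, hB⟩ := (isCompact_Icc (a := (0 : ℝ)) (b := 1)).bddAbove_image
    (continuous_cutoffEnergy smoothTransition.contDiff).continuousOn
  refine ⟨B, fun t ↦ ?_⟩
  by_cases ht : t ∈ Set.Icc 0 1
  · rw [Set.indicator_of_mem ht]
    exact hB ⟨t, ht, rfl⟩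
  rw [Set.indicator_of_notMem ht]
  rcases not_and_or.1 ht with ht | ht
  · exact (cutoffEnergy_eq_zero_of_eventuallyEq_const (c := 0) <|
      (eventually_lt_nhds (not_le.1 ht)).mono fun x hx ↦ smoothTransition.zero_of_nonpos hx.le).le
  · exact (cutoffEnergy_eq_zero_of_eventuallyEq_const (c := 1) <|
      (eventually_gt_nhds (not_le.1 ht)).mono fun x hx ↦ smoothTransition.one_of_one_le hx.le).le

/-- A smooth cutoff supported in `[δ, 2/δ]` and equal to `1` on `[2δ, 1/δ]`. -/
def bandCutoff (δ t : ℝ) : ℝ := smoothTransition (δ⁻¹ * t + -1) * smoothTransition (-δ * t + 2)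

lemma contDiff_bandCutoff (δ : ℝ) : ContDiff ℝ ∞ (bandCutoff δ) :=
  (smoothTransition.contDiff.comp (by fun_prop)).mul (smoothTransition.contDiff.comp (by fun_prop))

lemma tsupport_bandCutoff_subset {δ : ℝ} (hδ : 0 < δ) :
    tsupport (bandCutoff δ) ⊆ Set.Icc δ (2 / δ) := by
  refine closure_minimal (fun t ht ↦ ?_) isClosed_Icc
  have hlow : 0 < δ⁻¹ * t + -1 := by
    by_contra! h
    exact ht (by rw [bandCutoff, smoothTransition.zero_of_nonpos h, zero_mul])
  have hhigh : 0 < -δ * t + 2 := by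
    by_contra! h
    exact ht (by rw [bandCutoff, smoothTransition.zero_of_nonpos h, mul_zero])
  rw [Set.mem_Icc, le_div_iff₀ hδ]
  refine ⟨?_, by linarith⟩
  have := mul_pos hδ hlow
  field_simp at this
  linarith

lemma bandCutoff_eq_one {δ t : ℝ} (hδ : 0 < δ) (h₁ : 2 * δ ≤ t) (h₂ : t ≤ δ⁻¹) :
    bandCutoff δ t = 1 := by
  have hlow : 1 ≤ δ⁻¹ * t + -1 := by
    have : δ⁻¹ * (2 * δ) ≤ δ⁻¹ * t := by gcongr
    rw [mul_left_comm, inv_mul_cancel₀ hδ.ne'] at this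
    linarith
  have hhigh : 1 ≤ -δ * t + 2 := by
    have : δ * t ≤ δ * δ⁻¹ := by gcongr
    rw [mul_inv_cancel₀ hδ.ne'] at this
    linarith
  rw [bandCutoff, smoothTransition.one_of_one_le hlow, smoothTransition.one_of_one_le hhigh,
    mul_one]

lemma exists_cutoffEnergy_bandCutoff_le : ∃ B : ℝ, 0 ≤ B ∧ ∀ δ : ℝ, 0 < δ → ∀ t,
    cutoffEnergy (bandCutoff δ) t ≤ (Set.Icc δ (2 * δ)).indicator (fun _ ↦ B * δ⁻¹ ^ 2) t +
      (Set.Icc δ⁻¹ (2 * δ⁻¹)).indicator (fun _ ↦ B * δ ^ 2) t := by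
  obtain ⟨B, hB⟩ := exists_cutoffEnergy_smoothTransition_le
  have hB0 : 0 ≤ B := by simpa using (cutoffEnergy_nonneg _ 0).trans (hB 0)
  refine ⟨3 * B, by positivity, fun δ hδ t ↦ ?_⟩
  have habs : ∀ x, |smoothTransition x| ≤ 1 := fun x ↦ by
    rw [abs_of_nonneg (smoothTransition.nonneg x)]
    exact smoothTransition.le_one x
  have hmul := cutoffEnergy_mul_le
    (f := fun t ↦ smoothTransition (δ⁻¹ * t + -1)) (h := fun t ↦ smoothTransition (-δ * t + 2))
    (smoothTransition.contDiff.comp (by fun_prop)) (smoothTransition.contDiff.comp (by fun_prop))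
    (fun _ ↦ habs _) (fun _ ↦ habs _) t
  have hlow : δ⁻¹ * t + -1 ∈ Set.Icc 0 1 ↔ t ∈ Set.Icc δ (2 * δ) := by
    rw [Set.mem_Icc, Set.mem_Icc, inv_mul_eq_div, ← sub_eq_add_neg, sub_nonneg, one_le_div₀ hδ,
      sub_le_iff_le_add, div_le_iff₀ hδ, one_add_one_eq_two]
  have hhigh : -δ * t + 2 ∈ Set.Icc 0 1 ↔ t ∈ Set.Icc δ⁻¹ (2 * δ⁻¹) := by
    rw [Set.mem_Icc, Set.mem_Icc, ← div_eq_mul_inv, le_div_iff₀ hδ, inv_le_iff_one_le_mul₀ hδ,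
      and_comm]
    constructor <;> rintro ⟨h₁, h₂⟩ <;> constructor <;> linarith
  rw [cutoffEnergy_comp_mul_add, cutoffEnergy_comp_mul_add, neg_sq] at hmul
  have h₁ := mul_le_mul_of_nonneg_left (hB (δ⁻¹ * t + -1)) (sq_nonneg δ⁻¹)
  have h₂ := mul_le_mul_of_nonneg_left (hB (-δ * t + 2)) (sq_nonneg δ)
  have key : cutoffEnergy (bandCutoff δ) t ≤
    3 * (δ⁻¹ ^ 2 * (Set.Icc 0 1).indicator (fun _ ↦ B) (δ⁻¹ * t + -1) +
      δ ^ 2 * (Set.Icc 0 1).indicator (fun _ ↦ B) (-δ * t + 2)) :=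
    hmul.trans (by gcongr)
  refine key.trans_eq ?_
  classical
  simp only [Set.indicator_apply, hlow, hhigh]
  split_ifs <;> ring

end Cutoff

section OdeUniqueness

variable {H : Type*} [NormedAddCommGroup H] {g : ℝ → H} {D s : ℝ}

lemma exists_cutoffEnergy_bandCutoff_mul_sq_le (hD : ∀ t, ‖g t‖ ≤ D) (hs : 0 ≤ s)
    (hDs : ∀ t, 0 ≤ t → ‖g t‖ ≤ D * t ^ s) :
    ∃ C : ℝ, ∀ δ : ℝ, 0 < δ → ∀ t, cutoffEnergy (bandCutoff δ) t * ‖g t‖ ^ 2 ≤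
      (Set.Icc δ (2 * δ)).indicator (fun _ ↦ C * δ ^ (2 * s - 2)) t +
        (Set.Icc δ⁻¹ (2 * δ⁻¹)).indicator (fun _ ↦ C * δ ^ 2) t := by
  obtain ⟨B, hB0, hB⟩ := exists_cutoffEnergy_bandCutoff_le
  have hD0 : 0 ≤ D := (norm_nonneg _).trans (hD 0)
  have htwo : (1 : ℝ) ≤ 2 ^ (2 * s) := one_le_rpow one_le_two (by positivity)
  refine ⟨B * D ^ 2 * 2 ^ (2 * s), fun δ hδ t ↦ ?_⟩
  have hlow : t ∈ Set.Icc δ (2 * δ) →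
      B * δ⁻¹ ^ 2 * ‖g t‖ ^ 2 ≤ B * D ^ 2 * 2 ^ (2 * s) * δ ^ (2 * s - 2) := fun ht ↦ by
    have ht0 : 0 ≤ t := hδ.le.trans ht.1
    calc B * δ⁻¹ ^ 2 * ‖g t‖ ^ 2 ≤ B * δ⁻¹ ^ 2 * (D * (2 * δ) ^ s) ^ 2 := by
          gcongr
          exact (hDs t ht0).trans (by gcongr; exact ht.2)
      _ = B * D ^ 2 * 2 ^ (2 * s) * δ ^ (2 * s - 2) := by
          rw [mul_rpow two_pos.le hδ.le, rpow_sub hδ, rpow_ofNat, mul_comm 2 s,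
            rpow_mul two_pos.le, rpow_mul hδ.le, rpow_ofNat, rpow_ofNat]
          field_simp
  have hhigh : B * δ ^ 2 * ‖g t‖ ^ 2 ≤ B * D ^ 2 * 2 ^ (2 * s) * δ ^ 2 := by
    calc B * δ ^ 2 * ‖g t‖ ^ 2 ≤ B * δ ^ 2 * D ^ 2 := by gcongr; exact hD t
      _ = B * D ^ 2 * 1 * δ ^ 2 := by ring
      _ ≤ B * D ^ 2 * 2 ^ (2 * s) * δ ^ 2 := by gcongr
  refine (mul_le_mul_of_nonneg_right (hB δ hδ t) (sq_nonneg _)).trans ?_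
  classical
  simp only [add_mul, Set.indicator_apply, ite_mul, zero_mul]
  gcongr <;> split_ifs with ht
  exacts [hlow ht, le_rfl, hhigh, le_rfl]

lemma exists_integral_cutoffEnergy_le (hD : ∀ t, ‖g t‖ ≤ D) (hs : 0 ≤ s)
    (hDs : ∀ t, 0 ≤ t → ‖g t‖ ≤ D * t ^ s) :
    ∃ C : ℝ, ∀ δ : ℝ, 0 < δ →
      ∫ t, cutoffEnergy (bandCutoff δ) t * ‖g t‖ ^ 2 ≤ C * (δ ^ (2 * s - 1) + δ) := by
  obtain ⟨C, hC⟩ := exists_cutoffEnergy_bandCutoff_mul_sq_le hD hs hDs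
  refine ⟨C, fun δ hδ ↦ ?_⟩
  have hint : ∀ x y m : ℝ, Integrable ((Set.Icc x y).indicator fun _ ↦ m) := fun x y m ↦
    (integrable_indicator_iff measurableSet_Icc).2 (by simp)
  have hval : ∀ x m : ℝ, 0 < x → ∫ t, (Set.Icc x (2 * x)).indicator (fun _ ↦ m) t = x * m := by
    intro x m hx
    rw [integral_indicator_const _ measurableSet_Icc, volume_real_Icc_of_le (by linarith),
      smul_eq_mul]
    ring
  refine (integral_mono_of_nonneg
    (.of_forall fun t ↦ mul_nonneg (cutoffEnergy_nonneg _ _) (sq_nonneg _))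
    ((hint _ _ _).add (hint _ _ _)) (.of_forall (hC δ hδ))).trans_eq ?_
  simp only [Pi.add_apply]
  rw [integral_add (hint _ _ _) (hint _ _ _), hval _ _ hδ, hval _ _ (inv_pos.2 hδ),
    show 2 * s - 1 = 2 * s - 2 + 1 by ring, rpow_add hδ, rpow_one]
  field_simp

variable [InnerProductSpace ℂ H] [CompleteSpace H] {a b c : H →L[ℂ] H} {κ : ℝ}

lemma IsWeakOdeSolution.half_setIntegral_sq_le (hκ : 0 < κ) (hcoer : IsCoerciveOde κ a b c)
    (hg : Continuous g) (hsol : IsWeakOdeSolution a b c g) {δ x y : ℝ} (hδ : 0 < δ)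
    (hx : 2 * δ ≤ x) (hy : y ≤ δ⁻¹) :
    κ / 2 * ∫ t in Set.Icc x y, ‖g t‖ ^ 2 ≤ (‖a‖ + (‖a‖ ^ 2 / κ + ‖b‖ ^ 2 / (2 * κ))) *
      ∫ t, cutoffEnergy (bandCutoff δ) t * ‖g t‖ ^ 2 := by
  have hsupp := tsupport_bandCutoff_subset hδ
  have hcomp : HasCompactSupport (bandCutoff δ) :=
    isCompact_Icc.of_isClosed_subset (isClosed_tsupport _) hsupp
  refine le_trans ?_ (hsol.caccioppoli_inequality hκ hcoer hg (contDiff_bandCutoff δ) hcomp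
    (hsupp.trans fun t ht ↦ hδ.trans_le ht.1))
  gcongr
  have hcont : Continuous fun t ↦ bandCutoff δ t ^ 2 * ‖g t‖ ^ 2 :=
    ((contDiff_bandCutoff δ).continuous.pow 2).mul (hg.norm.pow 2)
  have hint : Integrable fun t ↦ bandCutoff δ t ^ 2 * ‖g t‖ ^ 2 :=
    hcont.integrable_of_hasCompactSupport
      (hcomp.comp_left (g := fun y : ℝ ↦ y ^ 2) (zero_pow two_ne_zero)).mul_right
  refine le_of_eq_of_le (setIntegral_congr_fun measurableSet_Icc fun t ht ↦ ?_)
    (setIntegral_le_integral hint (.of_forall fun t ↦ by positivity))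
  simp only [bandCutoff_eq_one hδ (hx.trans ht.1) (ht.2.trans hy), one_pow, one_mul]

theorem IsWeakOdeSolution.eq_zero (hκ : 0 < κ) (hcoer : IsCoerciveOde κ a b c)
    (hg : Continuous g) (hsol : IsWeakOdeSolution a b c g) (hD : ∀ t, ‖g t‖ ≤ D)
    (hs : 1 / 2 < s) (hDs : ∀ t, 0 ≤ t → ‖g t‖ ≤ D * t ^ s) {t : ℝ} (ht : 0 < t) : g t = 0 := by
  obtain ⟨C, hC⟩ := exists_integral_cutoffEnergy_le hD (by linarith) hDs
  set K := ‖a‖ + (‖a‖ ^ 2 / κ + ‖b‖ ^ 2 / (2 * κ))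
  have hbound : ∀ᶠ δ in 𝓝[>] (0 : ℝ),
      κ / 2 * ∫ x in Set.Icc (t / 2) t, ‖g x‖ ^ 2 ≤ K * (C * (δ ^ (2 * s - 1) + δ)) := by
    have h₁ : ∀ᶠ δ in 𝓝[>] (0 : ℝ), δ < t / 4 :=
      nhdsWithin_le_nhds (eventually_lt_nhds (by positivity))
    have h₂ : ∀ᶠ δ in 𝓝[>] (0 : ℝ), t < δ⁻¹ := tendsto_inv_nhdsGT_zero.eventually_gt_atTop t
    filter_upwards [h₁, h₂, self_mem_nhdsWithin] with δ hδ₁ hδ₂ (hδ : 0 < δ)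
    exact (hsol.half_setIntegral_sq_le hκ hcoer hg hδ (by linarith) hδ₂.le).trans
      (by gcongr; exact hC δ hδ)
  have hlim : Tendsto (fun δ : ℝ ↦ K * (C * (δ ^ (2 * s - 1) + δ))) (𝓝[>] 0) (𝓝 0) := by
    have hpow : Tendsto (fun δ : ℝ ↦ δ ^ (2 * s - 1)) (𝓝 0) (𝓝 0) := by
      have h := (continuousAt_rpow_const 0 (2 * s - 1) (.inr (by linarith))).tendsto
      rwa [zero_rpow (by linarith)] at h
    simpa using (((hpow.add tendsto_id).const_mul C).const_mul K).mono_left nhdsWithin_le_nhds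
  have hnonneg : 0 ≤ ∫ x in Set.Icc (t / 2) t, ‖g x‖ ^ 2 := integral_nonneg fun _ ↦ sq_nonneg _
  have hzero : ∫ x in Set.Icc (t / 2) t, ‖g x‖ ^ 2 = 0 := by
    nlinarith [ge_of_tendsto hlim hbound]
  have hae := (setIntegral_eq_zero_iff_of_nonneg_ae (.of_forall fun _ ↦ sq_nonneg _)
    (hg.norm.pow 2).continuousOn.integrableOn_Icc).1 hzero
  have := Measure.eqOn_Icc_of_ae_eq volume (by linarith) hae (hg.norm.pow 2).continuousOn
    continuousOn_const (Set.right_mem_Icc.2 (by linarith))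
  simpa using this

end OdeUniqueness

section HalfSpaceCoordinates

variable {n : ℕ}

lemma continuous_xlast : Continuous (xlast (n := n)) := by
  unfold xlast
  split_ifs <;> fun_prop

lemma continuous_xinit : Continuous (xinit (n := n)) :=
  (PiLp.continuous_toLp 2 _).comp (continuous_pi fun _ ↦ by fun_prop)

lemma continuous_uncurry_toUp :
    Continuous fun p : EuclideanSpace ℝ (Fin (n - 1)) × ℝ ↦
      (toUp p.1 p.2 : EuclideanSpace ℝ (Fin n)) := by
  refine (PiLp.continuous_toLp 2 _).comp (continuous_pi fun i ↦ ?_)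
  split_ifs <;> fun_prop

lemma measurableSet_upperHalfSpace : MeasurableSet (upperHalfSpace n) :=
  measurableSet_lt measurable_const continuous_xlast.measurable

lemma xinit_toUp (x' : EuclideanSpace ℝ (Fin (n - 1))) (t : ℝ) :
    xinit (toUp x' t : EuclideanSpace ℝ (Fin n)) = x' := by
  ext i
  simp [xinit, toUp]

variable [NeZero n]

lemma xlast_toUp (x' : EuclideanSpace ℝ (Fin (n - 1))) (t : ℝ) :
    xlast (toUp x' t : EuclideanSpace ℝ (Fin n)) = t := by
  simp [xlast, toUp, Nat.pos_of_neZero]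

lemma toUp_xinit_xlast (x : EuclideanSpace ℝ (Fin n)) : toUp (xinit x) (xlast x) = x := by
  ext i
  by_cases hi : (i : ℕ) < n - 1
  · simp [toUp, xinit, hi]
  · have : i = ⟨n - 1, Nat.sub_one_lt (NeZero.ne n)⟩ := by ext; dsimp; omega
    simp [toUp, xlast, Nat.pos_of_neZero, this]

lemma inner_toUp_toUp (x' y' : EuclideanSpace ℝ (Fin (n - 1))) (t s : ℝ) :
    inner ℝ (toUp x' t : EuclideanSpace ℝ (Fin n)) (toUp y' s) = inner ℝ x' y' + t * s := by
  obtain ⟨m, rfl⟩ := Nat.exists_eq_succ_of_ne_zero (NeZero.ne n)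
  simp only [PiLp.inner_apply, toUp]
  rw [Fin.sum_univ_castSucc]
  simp [mul_comm]

lemma measurePreserving_toUp :
    MeasurePreserving fun p : EuclideanSpace ℝ (Fin (n - 1)) × ℝ ↦
      (toUp p.1 p.2 : EuclideanSpace ℝ (Fin n)) := by
  obtain ⟨m, rfl⟩ := Nat.exists_eq_succ_of_ne_zero (NeZero.ne n)
  have hswap : MeasurePreserving fun p : EuclideanSpace ℝ (Fin m) × ℝ ↦
      (p.2, (MeasurableEquiv.toLp 2 (Fin m → ℝ)).symm p.1) :=
    ((MeasurePreserving.id volume).prod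
      (EuclideanSpace.volume_preserving_symm_measurableEquiv_toLp (Fin m))).comp
      (Measure.measurePreserving_swap (μ := volume) (ν := volume))
  change MeasurePreserving fun p : EuclideanSpace ℝ (Fin m) × ℝ ↦
    (toUp p.1 p.2 : EuclideanSpace ℝ (Fin (m + 1)))
  convert (PiLp.volume_preserving_toLp (Fin (m + 1))).comp
    ((volume_preserving_piFinSuccAbove (fun _ ↦ ℝ) (Fin.last m)).symm.comp hswap) using 1
  ext p i
  induction i using Fin.lastCases <;>
    simp [toUp, MeasurableEquiv.piFinSuccAbove, Fin.insertNthEquiv]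

lemma measurableEmbedding_toUp :
    MeasurableEmbedding fun p : EuclideanSpace ℝ (Fin (n - 1)) × ℝ ↦
      (toUp p.1 p.2 : EuclideanSpace ℝ (Fin n)) :=
  continuous_uncurry_toUp.measurableEmbedding fun p q h ↦
    Prod.ext (by simpa only [xinit_toUp] using congrArg xinit h)
      (by simpa only [xlast_toUp] using congrArg xlast h)

lemma measurePreserving_toUp_restrict :
    MeasurePreserving (fun p : EuclideanSpace ℝ (Fin (n - 1)) × ℝ ↦
      (toUp p.1 p.2 : EuclideanSpace ℝ (Fin n)))
      (volume.prod (volume.restrict (Set.Ioi 0))) (volume.restrict (upperHalfSpace n)) := by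
  have hset : (fun p : EuclideanSpace ℝ (Fin (n - 1)) × ℝ ↦
      (toUp p.1 p.2 : EuclideanSpace ℝ (Fin n))) ⁻¹' upperHalfSpace n =
      Set.univ ×ˢ Set.Ioi 0 := by
    ext p
    simp [upperHalfSpace, xlast_toUp]
  rw [← Measure.restrict_univ (μ := (volume : Measure (EuclideanSpace ℝ (Fin (n - 1))))),
    Measure.prod_restrict, ← hset]
  exact measurePreserving_toUp.restrict_preimage measurableSet_upperHalfSpace

variable {E : Type*} [NormedAddCommGroup E] {F : EuclideanSpace ℝ (Fin n) → E}

lemma integrableOn_upperHalfSpace_iff :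
    IntegrableOn F (upperHalfSpace n) ↔
      Integrable (fun p : EuclideanSpace ℝ (Fin (n - 1)) × ℝ ↦ F (toUp p.1 p.2))
        (volume.prod (volume.restrict (Set.Ioi 0))) :=
  (measurePreserving_toUp_restrict.integrable_comp_emb measurableEmbedding_toUp).symm

lemma setIntegral_upperHalfSpace [NormedSpace ℝ E] (hF : IntegrableOn F (upperHalfSpace n)) :
    ∫ x in upperHalfSpace n, F x = ∫ t in Set.Ioi 0, ∫ x', F (toUp x' t) := by
  rw [← measurePreserving_toUp_restrict.integral_comp measurableEmbedding_toUp,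
    integral_prod_symm _ (integrableOn_upperHalfSpace_iff.1 hF)]

end HalfSpaceCoordinates

section DerivBounds

open scoped ContDiff

variable {E E' F : Type*} [NormedAddCommGroup E] [NormedSpace ℝ E]
  [NormedAddCommGroup E'] [NormedSpace ℝ E'] [NormedAddCommGroup F] [NormedSpace ℝ F]
  {C D : ℕ → ℝ}

/-- `f` is smooth and its derivatives of order `j` are bounded by `C j`. The bounds are recorded
in order to speak of uniformity over families of functions. -/
structure HasDerivBounds (f : E → F) (C : ℕ → ℝ) : Prop where
  contDiff : ContDiff ℝ ∞ f
  norm_iteratedFDeriv_le : ∀ j x, ‖iteratedFDeriv ℝ j f x‖ ≤ C j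

lemma HasDerivBounds.comp_continuousLinearMap {f : E → F} (hf : HasDerivBounds f C)
    (L : E' →L[ℝ] E) : HasDerivBounds (f ∘ L) fun j ↦ C j * ‖L‖ ^ j where
  contDiff := hf.contDiff.comp L.contDiff
  norm_iteratedFDeriv_le j x := by
    rw [L.iteratedFDeriv_comp_right hf.contDiff x (by exact_mod_cast le_top)]
    refine (ContinuousMultilinearMap.norm_compContinuousLinearMap_le _ _).trans ?_
    simpa using mul_le_mul_of_nonneg_right (hf.norm_iteratedFDeriv_le j (L x)) (by positivity)

lemma HasDerivBounds.mul {f g : E → ℂ} (hf : HasDerivBounds f C) (hg : HasDerivBounds g D) :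
    HasDerivBounds (fun x ↦ f x * g x)
      fun j ↦ ∑ i ∈ Finset.range (j + 1), j.choose i * C i * D (j - i) where
  contDiff := hf.contDiff.mul hg.contDiff
  norm_iteratedFDeriv_le j x := by
    refine (norm_iteratedFDeriv_mul_le hf.contDiff hg.contDiff x
      (by exact_mod_cast le_top)).trans (Finset.sum_le_sum fun i _ ↦ ?_)
    gcongr
    · exact mul_nonneg (Nat.cast_nonneg _) ((norm_nonneg _).trans (hf.norm_iteratedFDeriv_le i x))
    · exact hf.norm_iteratedFDeriv_le i x
    · exact hg.norm_iteratedFDeriv_le (j - i) x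

lemma exists_hasDerivBounds {f : E → F} (hf : ContDiff ℝ ∞ f) (hfc : HasCompactSupport f) :
    ∃ C, HasDerivBounds f C := by
  choose C hC using fun j : ℕ ↦ (hfc.iteratedFDeriv (𝕜 := ℝ) j).exists_bound_of_continuous
    (hf.continuous_iteratedFDeriv (by exact_mod_cast le_top))
  exact ⟨C, hf, hC⟩

lemma iteratedDeriv_cexp_neg_mul_I (j : ℕ) :
    iteratedDeriv j (fun t : ℝ ↦ Complex.exp (-(t * Complex.I))) =
      fun t : ℝ ↦ (-Complex.I) ^ j * Complex.exp (-(t * Complex.I)) := by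
  induction j with
  | zero => simp
  | succ j ih =>
    ext t
    have hlin : HasDerivAt (fun t : ℝ ↦ -(t * Complex.I)) (-(1 * Complex.I)) t :=
      ((hasDerivAt_id t).ofReal_comp.mul_const Complex.I).neg
    rw [iteratedDeriv_succ, ih, (hlin.cexp.const_mul _).deriv]
    ring

lemma hasDerivBounds_cexp_neg_mul_I :
    HasDerivBounds (fun t : ℝ ↦ Complex.exp (-(t * Complex.I))) fun _ ↦ 1 where
  contDiff := (Complex.ofRealCLM.contDiff.mul contDiff_const).neg.cexp
  norm_iteratedFDeriv_le j t := by
    rw [norm_iteratedFDeriv_eq_norm_iteratedDeriv, iteratedDeriv_cexp_neg_mul_I]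
    simp [Complex.norm_exp]

lemma HasDerivBounds.exists_compactlySupported_approx [FiniteDimensional ℝ E] {f : E → ℂ}
    (hf : HasDerivBounds f C) :
    ∃ (D : ℕ → ℝ) (F : ℕ → E → ℂ),
      (∀ N, HasDerivBounds (F N) D ∧ HasCompactSupport (F N) ∧ tsupport (F N) ⊆ tsupport f) ∧
      ∀ x, ∀ᶠ N in atTop, F N =ᶠ[𝓝 x] f := by
  let χ : ContDiffBump (0 : E) := default
  have hχc : HasCompactSupport fun x ↦ (χ x : ℂ) :=
    χ.hasCompactSupport.comp_left (g := fun r : ℝ ↦ (r : ℂ)) Complex.ofReal_zero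
  obtain ⟨B, hB⟩ := exists_hasDerivBounds (Complex.ofRealCLM.contDiff.comp χ.contDiff) hχc
  let L : ℕ → E →L[ℝ] E := fun N ↦ ((N : ℝ) + 1)⁻¹ • .id ℝ E
  have hL : ∀ N, ‖L N‖ ≤ 1 := fun N ↦ by
    rw [norm_smul, norm_of_nonneg (by positivity)]
    exact mul_le_one₀ (inv_le_one_of_one_le₀ (by linarith [N.cast_nonneg (α := ℝ)]))
      (norm_nonneg _) ContinuousLinearMap.norm_id_le
  have hχL : ∀ N, HasDerivBounds (fun x ↦ (χ (L N x) : ℂ)) B := fun N ↦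
    ⟨(hB.comp_continuousLinearMap (L N)).contDiff, fun j x ↦
      ((hB.comp_continuousLinearMap (L N)).norm_iteratedFDeriv_le j x).trans <|
        mul_le_of_le_one_right ((norm_nonneg _).trans (hB.norm_iteratedFDeriv_le j 0))
          (pow_le_one₀ (norm_nonneg _) (hL N))⟩
  refine ⟨_, fun N x ↦ χ (L N x) * f x, fun N ↦ ⟨(hχL N).mul hf, ?_, tsupport_mul_subset_right⟩,
    fun x ↦ ?_⟩
  · exact (hχc.comp_smul (inv_ne_zero (by positivity : (N : ℝ) + 1 ≠ 0))).mul_right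
  filter_upwards [eventually_gt_atTop ⌈‖x‖⌉₊] with N hN
  have hxN : ‖x‖ < N + 1 := (Nat.lt_of_ceil_lt hN).trans (lt_add_one _)
  filter_upwards [continuous_norm.continuousAt.eventually_lt_const hxN] with y hy
  have hy' : χ (L N y) = 1 := χ.one_of_mem_closedBall <| by
    rw [mem_closedBall_zero_iff, smul_apply, ContinuousLinearMap.id_apply, norm_smul,
      norm_of_nonneg (by positivity)]
    exact (inv_mul_lt_one₀ (by positivity)).2 hy |>.le
  rw [hy', Complex.ofReal_one, one_mul]

end DerivBounds

section PlaneWave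

open scoped ContDiff

variable {n : ℕ}

/-- The wave `e^{-i⟪p, x⟫} θ(⟪q, x⟫)`, oscillating along `p` with profile `θ` along `q`. -/
def planeWave (p q : EuclideanSpace ℝ (Fin n)) (θ : ℝ → ℂ) (x : EuclideanSpace ℝ (Fin n)) : ℂ :=
  Complex.exp (-(inner ℝ p x * Complex.I)) * θ (inner ℝ q x)

variable (p q : EuclideanSpace ℝ (Fin n)) {θ : ℝ → ℂ} {S : Set ℝ}

lemma pd_planeWave (r : Fin n) (hθ : Differentiable ℝ θ) :
    pd r (planeWave p q θ) =
      planeWave p q fun t ↦ q r * deriv θ t - Complex.I * p r * θ t := by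
  ext x
  have hp : HasFDerivAt (fun x ↦ -((inner ℝ p x : ℝ) * Complex.I)) _ x :=
    ((Complex.ofRealCLM.hasFDerivAt.comp x (innerSL ℝ p).hasFDerivAt).mul_const Complex.I).neg
  have hq : HasFDerivAt (fun x ↦ θ (inner ℝ q x)) _ x :=
    (hθ (inner ℝ q x)).hasDerivAt.hasFDerivAt.comp x (innerSL ℝ q).hasFDerivAt
  have h : HasFDerivAt (planeWave p q θ) _ x := hp.cexp.mul hq
  simp only [pd, h.fderiv, smul_neg, add_apply, smul_apply, ContinuousLinearMap.comp_apply,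
    coe_innerSL_apply, EuclideanSpace.inner_single_right, ringHom_apply, one_mul, smul_eq_mul,
    ContinuousLinearMap.toSpanSingleton_apply, Complex.real_smul, neg_apply,
    Complex.ofRealCLM_apply, planeWave]
  ring

lemma exists_hasDerivBounds_planeWave (hθ : ContDiff ℝ ∞ θ) (hθc : HasCompactSupport θ) :
    ∃ C, HasDerivBounds (planeWave p q θ) C := by
  obtain ⟨B, hB⟩ := exists_hasDerivBounds hθ hθc
  exact ⟨_, (hasDerivBounds_cexp_neg_mul_I.comp_continuousLinearMap (innerSL ℝ p)).mul
    (hB.comp_continuousLinearMap (innerSL ℝ q))⟩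

lemma pd_pd_planeWave (r s : Fin n) (hθ : ContDiff ℝ ∞ θ) :
    pd r (pd s (planeWave p q θ)) = planeWave p q fun t ↦
      q r * q s * deriv (deriv θ) t - Complex.I * (p r * q s + q r * p s) * deriv θ t -
        p r * p s * θ t := by
  have hθ₀ := hθ.differentiable (by simp)
  have hθ₁ := (contDiff_infty_iff_deriv.1 hθ).2.differentiable (by simp)
  rw [pd_planeWave p q s hθ₀, pd_planeWave p q r (by fun_prop)]
  ext x
  simp only [planeWave]
  rw [deriv_fun_sub (by fun_prop) (by fun_prop), deriv_const_mul_field, deriv_const_mul_field]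
  linear_combination (p r * p s * θ (inner ℝ q x) *
    Complex.exp (-(inner ℝ p x * Complex.I))) * Complex.I_sq

lemma tsupport_planeWave_subset (hθ : tsupport θ ⊆ S) :
    tsupport (planeWave p q θ) ⊆ (inner ℝ q ·) ⁻¹' S :=
  tsupport_mul_subset_right.trans <|
    (tsupport_comp_subset_preimage θ (by fun_prop)).trans (Set.preimage_mono hθ)

end PlaneWave

section TestOperator

open scoped ContDiff

variable {n : ℕ} {H : Type*} [NormedAddCommGroup H] [InnerProductSpace ℂ H]
  (T : Fin n → Fin n → H →L[ℂ] H)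

/-- The operator `∑ ∂_r ∂_s f(x) T_{rs}`, which pairs with the value `u x` in the weak formulation
of the system `∑ T_{rs} ∂_r ∂_s u = 0`. -/
def testOperator (f : EuclideanSpace ℝ (Fin n) → ℂ) (x : EuclideanSpace ℝ (Fin n)) : H →L[ℂ] H :=
  ∑ r, ∑ s, pd r (pd s f) x • T r s

/-- The symbol `∑ v_r w_s T_{rs}` of a second order operator with coefficients `T`, polarised. -/
def bilinSymbol (v w : EuclideanSpace ℝ (Fin n)) : H →L[ℂ] H :=
  ∑ r, ∑ s, ((v r : ℂ) * w s) • T r s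

/-- Legendre–Hadamard ellipticity with constant `κ`, for operator-valued coefficients. -/
def IsElliptic (κ : ℝ) : Prop :=
  ∀ (v : EuclideanSpace ℝ (Fin n)) (η : H),
    κ * ‖v‖ ^ 2 * ‖η‖ ^ 2 ≤ (inner ℂ η (bilinSymbol T v v η)).re

variable {T} {κ : ℝ}

lemma IsElliptic.isCoerciveOde (hT : IsElliptic T κ) (hκ : 0 ≤ κ)
    {p q : EuclideanSpace ℝ (Fin n)} (hpq : inner ℝ p q = 0) (hq : ‖q‖ = 1) :
    IsCoerciveOde (κ * min 1 (‖p‖ ^ 2)) (bilinSymbol T q q)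
      (Complex.I • (bilinSymbol T p q + bilinSymbol T q p)) (-bilinSymbol T p p) := by
  intro σ η
  have hsymbol : odeSymbol (bilinSymbol T q q)
      (Complex.I • (bilinSymbol T p q + bilinSymbol T q p)) (-bilinSymbol T p p)
      (σ * Complex.I) = -bilinSymbol T (p + σ • q) (p + σ • q) := by
    simp only [odeSymbol, bilinSymbol, Finset.smul_sum, ← Finset.sum_add_distrib,
      ← Finset.sum_neg_distrib]
    refine Finset.sum_congr rfl fun r _ ↦ Finset.sum_congr rfl fun s _ ↦ ?_
    simp only [PiLp.add_apply, PiLp.smul_apply, smul_eq_mul, Complex.ofReal_add,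
      Complex.ofReal_mul, mul_pow, Complex.I_sq]
    match_scalars
    linear_combination (σ * (p r * q s + q r * p s)) * Complex.I_sq
  have hnorm : ‖p + σ • q‖ ^ 2 = ‖p‖ ^ 2 + σ ^ 2 := by
    rw [norm_add_sq_real, inner_smul_right, hpq, norm_smul, hq]
    simp
  calc κ * min 1 (‖p‖ ^ 2) * (1 + σ ^ 2) * ‖η‖ ^ 2
      ≤ κ * ‖p + σ • q‖ ^ 2 * ‖η‖ ^ 2 := by
        rw [mul_assoc κ, hnorm]
        gcongr
        nlinarith [min_le_left 1 (‖p‖ ^ 2), min_le_right 1 (‖p‖ ^ 2), sq_nonneg σ]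
    _ ≤ (inner ℂ η (bilinSymbol T (p + σ • q) (p + σ • q) η)).re := hT _ η
    _ = _ := by rw [hsymbol, neg_apply, inner_neg_right, Complex.neg_re, neg_neg]

lemma testOperator_planeWave (p q : EuclideanSpace ℝ (Fin n)) {θ : ℝ → ℂ} (hθ : ContDiff ℝ ∞ θ)
    (x : EuclideanSpace ℝ (Fin n)) :
    testOperator T (planeWave p q θ) x =
      Complex.exp (-(inner ℝ p x * Complex.I)) •
        (deriv (deriv θ) (inner ℝ q x) • bilinSymbol T q q -
          deriv θ (inner ℝ q x) • Complex.I • (bilinSymbol T p q + bilinSymbol T q p) +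
          θ (inner ℝ q x) • -bilinSymbol T p p) := by
  simp only [testOperator, bilinSymbol, Finset.smul_sum, ← Finset.sum_add_distrib,
    ← Finset.sum_neg_distrib, ← Finset.sum_sub_distrib, pd_pd_planeWave p q _ _ hθ, planeWave]
  refine Finset.sum_congr rfl fun r _ ↦ Finset.sum_congr rfl fun s _ ↦ ?_
  module

variable {f g : EuclideanSpace ℝ (Fin n) → ℂ} {x : EuclideanSpace ℝ (Fin n)}

lemma pd_pd_eq_iteratedFDeriv (hf : ContDiff ℝ ∞ f) (r s : Fin n) (x : EuclideanSpace ℝ (Fin n)) :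
    pd r (pd s f) x =
      iteratedFDeriv ℝ 2 f x ![EuclideanSpace.single r 1, EuclideanSpace.single s 1] := by
  have hdf : DifferentiableAt ℝ (fderiv ℝ f) x :=
    (hf.fderiv_right (m := ∞) le_rfl).differentiable (by simp) x
  rw [iteratedFDeriv_two_apply]
  change fderiv ℝ (fun y ↦ fderiv ℝ f y (EuclideanSpace.single s 1)) x _ = _
  rw [fderiv_clm_apply hdf (differentiableAt_const _)]
  simp

lemma norm_pd_pd_le (hf : ContDiff ℝ ∞ f) (r s : Fin n) (x : EuclideanSpace ℝ (Fin n)) :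
    ‖pd r (pd s f) x‖ ≤ ‖iteratedFDeriv ℝ 2 f x‖ := by
  rw [pd_pd_eq_iteratedFDeriv hf]
  refine (ContinuousMultilinearMap.le_opNorm _ _).trans_eq ?_
  simp [Fin.prod_univ_two]

lemma norm_testOperator_le (T : Fin n → Fin n → H →L[ℂ] H) (hf : ContDiff ℝ ∞ f)
    (x : EuclideanSpace ℝ (Fin n)) :
    ‖testOperator T f x‖ ≤ ‖iteratedFDeriv ℝ 2 f x‖ * ∑ r, ∑ s, ‖T r s‖ := by
  simp only [testOperator, Finset.mul_sum]
  refine norm_sum_le_of_le _ fun r _ ↦ norm_sum_le_of_le _ fun s _ ↦ ?_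
  rw [norm_smul]
  exact mul_le_mul_of_nonneg_right (norm_pd_pd_le hf r s x) (norm_nonneg _)

lemma continuous_testOperator (T : Fin n → Fin n → H →L[ℂ] H) (hf : ContDiff ℝ ∞ f) :
    Continuous (testOperator T f) := by
  refine continuous_finsetSum _ fun r _ ↦ continuous_finsetSum _ fun s _ ↦ ?_
  simp only [pd_pd_eq_iteratedFDeriv hf]
  have hcont : Continuous (iteratedFDeriv ℝ 2 f) :=
    (contDiff_infty.1 hf 2).continuous_iteratedFDeriv le_rfl
  fun_prop

lemma testOperator_congr (T : Fin n → Fin n → H →L[ℂ] H) (hfg : f =ᶠ[𝓝 x] g) :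
    testOperator T f x = testOperator T g x := by
  have hpd : ∀ s, pd s f =ᶠ[𝓝 x] pd s g := fun s ↦ hfg.fderiv.fun_comp fun L ↦ L _
  simp only [testOperator]
  refine Finset.sum_congr rfl fun r _ ↦ Finset.sum_congr rfl fun s _ ↦ ?_
  simp only [pd]
  rw [(hpd s).fderiv_eq]

end TestOperator

section HalfSpaceNullSolution

open scoped ContDiff FourierTransform

variable {n : ℕ} {H : Type*} [NormedAddCommGroup H] [InnerProductSpace ℂ H]

/-- The extension `(x', t) ↦ t^{1-n} k(x'/t)` of a kernel `k` to the upper half-space. -/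
def poissonExtension (k : EuclideanSpace ℝ (Fin (n - 1)) → H) (x : EuclideanSpace ℝ (Fin n)) : H :=
  dilate k (xlast x) (xinit x)

/-- `u` solves `∑ T_{rs} ∂_r ∂_s u = 0` in the upper half-space in the sense of distributions.
Scalar test functions suffice because `T` acts on the values of `u` only. -/
def IsHalfSpaceNullSolution (T : Fin n → Fin n → H →L[ℂ] H) (u : EuclideanSpace ℝ (Fin n) → H) :
    Prop :=
  ∀ f : EuclideanSpace ℝ (Fin n) → ℂ, ContDiff ℝ ∞ f → HasCompactSupport f →
    tsupport f ⊆ upperHalfSpace n → ∫ x in upperHalfSpace n, testOperator T f x (u x) = 0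

variable {T : Fin n → Fin n → H →L[ℂ] H} {k : EuclideanSpace ℝ (Fin (n - 1)) → H}
  {f : EuclideanSpace ℝ (Fin n) → ℂ} {C : ℕ → ℝ} {S : Set ℝ}

lemma norm_testOperator_apply_le (T : Fin n → Fin n → H →L[ℂ] H) (hf : HasDerivBounds f C)
    (hfS : tsupport f ⊆ xlast ⁻¹' S) (x : EuclideanSpace ℝ (Fin n)) (v : H) :
    ‖testOperator T f x v‖ ≤
      (C 2 * ∑ r, ∑ s, ‖T r s‖) * (S.indicator 1 (xlast x) * ‖v‖) := by
  have hT := norm_testOperator_le T hf.contDiff x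
  by_cases hx : x ∈ tsupport f
  · have hxS : xlast x ∈ S := hfS hx
    rw [Set.indicator_of_mem hxS, Pi.one_apply, one_mul]
    refine (ContinuousLinearMap.le_opNorm _ _).trans ?_
    gcongr
    exact hT.trans (by gcongr; exact hf.norm_iteratedFDeriv_le 2 x)
  · have h₀ : iteratedFDeriv ℝ 2 f x = 0 :=
      image_eq_zero_of_notMem_tsupport fun h ↦ hx (tsupport_iteratedFDeriv_subset 2 h)
    rw [h₀, norm_zero, zero_mul] at hT
    rw [norm_le_zero_iff.1 hT, zero_apply, norm_zero]
    have hC : 0 ≤ C 2 := (norm_nonneg _).trans (hf.norm_iteratedFDeriv_le 2 x)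
    have hS : (0 : ℝ) ≤ S.indicator 1 (xlast x) := Set.indicator_nonneg (by simp) _
    positivity

lemma stronglyMeasurable_poissonExtension (hk : StronglyMeasurable k) :
    StronglyMeasurable (poissonExtension k) :=
  (stronglyMeasurable_uncurry_dilate hk).comp_measurable
    (continuous_xinit.measurable.prodMk continuous_xlast.measurable)

lemma aestronglyMeasurable_testOperator_poissonExtension (T : Fin n → Fin n → H →L[ℂ] H)
    (hf : ContDiff ℝ ∞ f) (hk : StronglyMeasurable k) {μ : Measure (EuclideanSpace ℝ (Fin n))} :
    AEStronglyMeasurable (fun x ↦ testOperator T f x (poissonExtension k x)) μ :=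
  (isBoundedBilinearMap_apply (𝕜 := ℂ).continuous.comp_stronglyMeasurable
    ((continuous_testOperator T hf).stronglyMeasurable.prodMk
      (stronglyMeasurable_poissonExtension hk))).aestronglyMeasurable

variable [NeZero n]

lemma integrableOn_indicator_mul_norm_poissonExtension (hk : StronglyMeasurable k)
    (hki : Integrable k) (hS : IsCompact S) :
    IntegrableOn (fun x : EuclideanSpace ℝ (Fin n) ↦
      S.indicator 1 (xlast x) * ‖poissonExtension k x‖) (upperHalfSpace n) := by
  rw [integrableOn_upperHalfSpace_iff]
  simp only [poissonExtension, xinit_toUp, xlast_toUp]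
  refine integrable_mul_norm_dilate hk hki (ρ := S.indicator 1) (Integrable.integrableOn ?_)
  exact (integrable_indicator_iff hS.measurableSet).2 (integrableOn_const hS.measure_ne_top)

lemma integrableOn_testOperator_poissonExtension (T : Fin n → Fin n → H →L[ℂ] H)
    (hk : StronglyMeasurable k) (hki : Integrable k) (hS : IsCompact S)
    (hf : HasDerivBounds f C) (hfS : tsupport f ⊆ xlast ⁻¹' S) :
    IntegrableOn (fun x ↦ testOperator T f x (poissonExtension k x)) (upperHalfSpace n) :=
  ((integrableOn_indicator_mul_norm_poissonExtension hk hki hS).const_mul _).mono'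
    (aestronglyMeasurable_testOperator_poissonExtension T hf.contDiff hk)
    (.of_forall fun _ ↦ norm_testOperator_apply_le T hf hfS _ _)

lemma IsHalfSpaceNullSolution.poissonExtension_sub {k₁ k₂ : EuclideanSpace ℝ (Fin (n - 1)) → H}
    (h₁ : IsHalfSpaceNullSolution T (poissonExtension k₁))
    (h₂ : IsHalfSpaceNullSolution T (poissonExtension k₂))
    (hk₁ : StronglyMeasurable k₁) (hk₂ : StronglyMeasurable k₂)
    (hki₁ : Integrable k₁) (hki₂ : Integrable k₂) :
    IsHalfSpaceNullSolution T (poissonExtension (k₁ - k₂)) := by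
  intro f hf hfc hf₀
  obtain ⟨C, hC⟩ := exists_hasDerivBounds hf hfc
  have hS : IsCompact (xlast '' tsupport f) := hfc.isCompact.image continuous_xlast
  have hint {k : EuclideanSpace ℝ (Fin (n - 1)) → H} (hk : StronglyMeasurable k)
      (hki : Integrable k) := integrableOn_testOperator_poissonExtension T hk hki hS hC
        (Set.subset_preimage_image xlast _)
  have hsub : poissonExtension (k₁ - k₂) = poissonExtension k₁ - poissonExtension (n := n) k₂ := by
    ext x
    simp [poissonExtension, dilate, smul_sub]
  simp only [hsub, Pi.sub_apply, map_sub]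
  rw [integral_sub (hint hk₁ hki₁) (hint hk₂ hki₂), h₁ f hf hfc hf₀, h₂ f hf hfc hf₀, sub_zero]

lemma IsHalfSpaceNullSolution.setIntegral_eq_zero
    (hT : IsHalfSpaceNullSolution T (poissonExtension k)) (hk : StronglyMeasurable k)
    (hki : Integrable k) (hS : IsCompact S) (hS₀ : S ⊆ Set.Ioi 0)
    (hf : HasDerivBounds f C) (hfS : tsupport f ⊆ xlast ⁻¹' S) :
    ∫ x in upperHalfSpace n, testOperator T f x (poissonExtension k x) = 0 := by
  obtain ⟨D, F, hF, hFf⟩ := hf.exists_compactlySupported_approx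
  have hzero : ∀ N, ∫ x in upperHalfSpace n, testOperator T (F N) x (poissonExtension k x) = 0 :=
    fun N ↦ hT (F N) (hF N).1.contDiff (hF N).2.1 <|
      ((hF N).2.2.trans hfS).trans (Set.preimage_mono hS₀)
  have hlim := tendsto_integral_of_dominated_convergence
    (μ := volume.restrict (upperHalfSpace n)) _
    (fun N ↦ aestronglyMeasurable_testOperator_poissonExtension T (hF N).1.contDiff hk)
    ((integrableOn_indicator_mul_norm_poissonExtension hk hki hS).const_mul _)
    (fun N ↦ .of_forall fun x ↦ norm_testOperator_apply_le T (hF N).1 ((hF N).2.2.trans hfS) x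
      (poissonExtension k x))
    (.of_forall fun x ↦ tendsto_const_nhds.congr' <|
      (hFf x).mono fun N hN ↦ congrArg (· (poissonExtension k x)) (testOperator_congr T hN).symm)
  simp only [hzero] at hlim
  exact tendsto_nhds_unique hlim tendsto_const_nhds

variable [CompleteSpace H]

lemma integral_testOperator_planeWave_poissonExtension (T : Fin n → Fin n → H →L[ℂ] H)
    (hk : Integrable k) {ψ : ℝ → ℂ} (hψ : ContDiff ℝ ∞ ψ) (ξ : EuclideanSpace ℝ (Fin (n - 1)))
    {t : ℝ} (ht : 0 < t) {p q : EuclideanSpace ℝ (Fin n)}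
    (hp : p = toUp ((2 * π) • ξ) 0) (hq : q = toUp 0 1) :
    ∫ x', testOperator T (planeWave p q ψ) (toUp x' t) (poissonExtension k (toUp x' t)) =
      (deriv (deriv ψ) t • bilinSymbol T q q -
        deriv ψ t • Complex.I • (bilinSymbol T p q + bilinSymbol T q p) +
        ψ t • -bilinSymbol T p p) (𝓕 k (t • ξ)) := by
  have hpx : ∀ x', inner ℝ p (toUp x' t) = 2 * π * inner ℝ x' ξ := fun x' ↦ by
    rw [hp, inner_toUp_toUp, inner_smul_left, real_inner_comm]
    simp
  have hqx : ∀ x', inner ℝ q (toUp x' t) = t := fun x' ↦ by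
    rw [hq, inner_toUp_toUp, inner_zero_left, zero_add, one_mul]
  rw [← fourier_dilate k ht, ← fourier_continuousLinearMap_comp _ (integrable_dilate hk ht),
    Real.fourier_eq']
  congr 1 with x'
  rw [testOperator_planeWave p q hψ, hpx, hqx, poissonExtension, xinit_toUp, xlast_toUp,
    smul_apply]
  congr 2
  push_cast
  ring

lemma IsHalfSpaceNullSolution.isWeakOdeSolution_fourier
    (hT : IsHalfSpaceNullSolution T (poissonExtension k)) (hk : StronglyMeasurable k)
    (hki : Integrable k) (ξ : EuclideanSpace ℝ (Fin (n - 1))) {p q : EuclideanSpace ℝ (Fin n)}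
    (hp : p = toUp ((2 * π) • ξ) 0) (hq : q = toUp 0 1) :
    IsWeakOdeSolution (bilinSymbol T q q)
      (Complex.I • (bilinSymbol T p q + bilinSymbol T q p)) (-bilinSymbol T p p)
      fun t ↦ 𝓕 k (t • ξ) := by
  intro ψ hψ hψc hψ₀
  obtain ⟨B, hB⟩ := exists_hasDerivBounds_planeWave p q hψ hψc
  have hsupp : tsupport (planeWave p q ψ) ⊆ xlast ⁻¹' tsupport ψ := by
    convert tsupport_planeWave_subset p q (θ := ψ) subset_rfl using 2
    ext x
    rw [← toUp_xinit_xlast x, hq, inner_toUp_toUp, xlast_toUp, inner_zero_left, zero_add, one_mul]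
  have hoff : ∀ t ∉ Set.Ioi (0 : ℝ), deriv (deriv ψ) t • bilinSymbol T q q (𝓕 k (t • ξ)) -
      deriv ψ t • (Complex.I • (bilinSymbol T p q + bilinSymbol T q p)) (𝓕 k (t • ξ)) +
      ψ t • (-bilinSymbol T p p) (𝓕 k (t • ξ)) = 0 := fun t ht ↦ by
    have h₀ : ψ =ᶠ[𝓝 t] 0 := notMem_tsupport_iff_eventuallyEq.1 fun h ↦ ht (hψ₀ h)
    rw [h₀.deriv.deriv_eq, h₀.deriv_eq, h₀.eq_of_nhds]
    simp
  rw [← setIntegral_eq_integral_of_forall_compl_eq_zero hoff,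
    ← hT.setIntegral_eq_zero hk hki hψc.isCompact hψ₀ hB hsupp, setIntegral_upperHalfSpace
      (integrableOn_testOperator_poissonExtension T hk hki hψc.isCompact hB hsupp)]
  refine setIntegral_congr_fun measurableSet_Ioi fun t ht ↦ ?_
  rw [integral_testOperator_planeWave_poissonExtension T hki hψ ξ ht hp hq]
  simp only [add_apply, sub_apply, smul_apply]

lemma IsHalfSpaceNullSolution.fourier_eq_zero {κ s : ℝ}
    (hT : IsHalfSpaceNullSolution T (poissonExtension k)) (hκ : 0 < κ) (hell : IsElliptic T κ)
    (hk : StronglyMeasurable k) (hki : Integrable k) (hk₀ : ∫ x, k x = 0)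
    (hs : 1 / 2 < s) (hs₁ : s ≤ 1) (hks : Integrable fun x ↦ ‖x‖ ^ s * ‖k x‖)
    {ξ : EuclideanSpace ℝ (Fin (n - 1))} (hξ : ξ ≠ 0) : 𝓕 k ξ = 0 := by
  set p : EuclideanSpace ℝ (Fin n) := toUp ((2 * π) • ξ) 0 with hp
  set q : EuclideanSpace ℝ (Fin n) := toUp 0 1 with hq
  have hp₀ : 0 < ‖p‖ ^ 2 := by
    rw [← real_inner_self_eq_norm_sq, hp, inner_toUp_toUp, zero_mul, add_zero,
      real_inner_self_eq_norm_sq]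
    have := norm_pos_iff.2 (smul_ne_zero two_pi_pos.ne' hξ)
    positivity
  have hpq : inner ℝ p q = 0 := by simp [hp, hq, inner_toUp_toUp]
  have hq₁ : ‖q‖ = 1 := by
    rw [← sq_eq_sq₀ (norm_nonneg q) zero_le_one, ← real_inner_self_eq_norm_sq, hq, inner_toUp_toUp]
    simp
  set B := 2 * (2 * π) ^ s * ∫ x, ‖x‖ ^ s * ‖k x‖
  have hdecay : ∀ t, 0 ≤ t →
      ‖𝓕 k (t • ξ)‖ ≤ max (∫ x, ‖k x‖) (B * ‖ξ‖ ^ s) * t ^ s := fun t ht ↦ by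
    calc ‖𝓕 k (t • ξ)‖ ≤ B * ‖t • ξ‖ ^ s :=
          norm_fourier_le_of_integral_eq_zero hki hk₀ (by linarith) hs₁ hks _
      _ = B * ‖ξ‖ ^ s * t ^ s := by
          rw [norm_smul, norm_of_nonneg ht, mul_rpow ht (norm_nonneg ξ)]
          ring
      _ ≤ _ := by gcongr; exact le_max_right _ _
  have hzero := (hT.isWeakOdeSolution_fourier hk hki ξ hp hq).eq_zero
    (mul_pos hκ (lt_min one_pos hp₀)) (hell.isCoerciveOde hκ.le hpq hq₁)
    ((continuous_fourier hki).comp (by fun_prop : Continuous fun t : ℝ ↦ t • ξ))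
    (fun t ↦ (norm_fourier_le_integral_norm k _).trans (le_max_left _ _)) hs hdecay one_pos
  simpa only [Function.comp_apply, one_smul] using hzero

theorem IsHalfSpaceNullSolution.ae_eq_zero {κ C : ℝ}
    (hT : IsHalfSpaceNullSolution T (poissonExtension k)) (hκ : 0 < κ) (hell : IsElliptic T κ)
    (hk : StronglyMeasurable k) (hC : ∀ x, ‖k x‖ ≤ C * (1 + ‖x‖ ^ 2) ^ (-(n : ℝ) / 2))
    (hk₀ : ∫ x, k x = 0) : k =ᵐ[volume] 0 := by
  have hdim : (Module.finrank ℝ (EuclideanSpace ℝ (Fin (n - 1))) : ℝ) = n - 1 := by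
    rw [finrank_euclideanSpace_fin, Nat.cast_pred (Nat.pos_of_neZero n)]
  have hki := integrable_of_norm_le_rpow_one_add_norm_sq hk.aestronglyMeasurable
    (by linarith) hC
  -- Any exponent in `(1/2, 1)` would do: `k` decays like `‖x‖ ^ (-n)` in dimension `n - 1`.
  have hks := integrable_norm_rpow_mul_norm (s := 3 / 4) hk.aestronglyMeasurable
    (by norm_num) (by linarith) hC
  refine ae_eq_of_fourier_eq hki (integrable_zero _ _ _) (funext fun ξ ↦ ?_)
  have hzero : 𝓕 (0 : EuclideanSpace ℝ (Fin (n - 1)) → H) ξ = 0 := by simp [Real.fourier_eq]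
  rw [hzero]
  rcases eq_or_ne ξ 0 with rfl | hξ
  · rw [fourier_zero_eq_integral, hk₀]
  · exact hT.fourier_eq_zero hκ hell hk hki hk₀ (by norm_num) (by norm_num) hks hξ

end HalfSpaceNullSolution

section Matrix

open scoped ContDiff ComplexConjugate

variable {n M : ℕ} {A : Fin n → Fin n → Fin M → Fin M → ℂ}
  {P Q : EuclideanSpace ℝ (Fin (n - 1)) → Matrix (Fin M) (Fin M) ℂ}

/-- The coefficient tensor `A` as a family of operators on `ℂ^M`. -/
def coeffOperator (A : Fin n → Fin n → Fin M → Fin M → ℂ) (r s : Fin n) :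
    EuclideanSpace ℂ (Fin M) →L[ℂ] EuclideanSpace ℂ (Fin M) :=
  Matrix.toEuclideanCLM (𝕜 := ℂ) (Matrix.of (A r s))

/-- The `β`-th column of a matrix-valued function. -/
def column (P : EuclideanSpace ℝ (Fin (n - 1)) → Matrix (Fin M) (Fin M) ℂ) (β : Fin M)
    (x' : EuclideanSpace ℝ (Fin (n - 1))) : EuclideanSpace ℂ (Fin M) :=
  WithLp.toLp 2 fun γ ↦ P x' γ β

lemma coeffOperator_apply (r s : Fin n) (η : EuclideanSpace ℂ (Fin M)) (α : Fin M) :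
    coeffOperator A r s η α = ∑ γ, A r s α γ * η γ := by
  simp [coeffOperator, Matrix.mulVec, dotProduct]

lemma LegendreHadamard.exists_isElliptic (hA : LegendreHadamard A) :
    ∃ κ, 0 < κ ∧ IsElliptic (coeffOperator A) κ := by
  obtain ⟨κ, hκ, hA⟩ := hA
  refine ⟨κ, hκ, fun v η ↦ ?_⟩
  convert hA v η using 2
  · rw [EuclideanSpace.real_norm_sq_eq]
  · rw [EuclideanSpace.norm_sq_eq]
  · simp only [bilinSymbol, sum_apply, inner_sum, smul_apply, inner_smul_right]
    refine Finset.sum_congr rfl fun r _ ↦ Finset.sum_congr rfl fun s _ ↦ ?_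
    simp only [PiLp.inner_apply, coeffOperator_apply, Finset.mul_sum, RCLike.inner_apply,
      Finset.sum_mul]
    refine Finset.sum_congr rfl fun a _ ↦ Finset.sum_congr rfl fun b _ ↦ ?_
    ring

lemma poissonExtension_column_apply [NeZero n] (β γ : Fin M) (x : EuclideanSpace ℝ (Fin n)) :
    poissonExtension (column P β) x γ = matDil P (xlast x) (xinit x) γ β := by
  have hpow : xlast x ^ ((1 : ℤ) - n) = (xlast x ^ (n - 1))⁻¹ := by
    rw [← zpow_natCast, ← zpow_neg, Nat.cast_pred (Nat.pos_of_neZero n), neg_sub]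
  simp [poissonExtension, dilate, column, matDil, hpow]

lemma testOperator_coeffOperator_apply (f : EuclideanSpace ℝ (Fin n) → ℂ)
    (x : EuclideanSpace ℝ (Fin n)) (η : EuclideanSpace ℂ (Fin M)) (α : Fin M) :
    testOperator (coeffOperator A) f x η α =
      ∑ γ, ∑ r, ∑ s, η γ * A r s α γ * pd r (pd s f) x := by
  simp only [testOperator, sum_apply, smul_apply, WithLp.ofLp_sum, Finset.sum_apply,
    PiLp.smul_apply, coeffOperator_apply, smul_eq_mul, Finset.mul_sum]
  symm
  rw [Finset.sum_comm]
  refine Finset.sum_congr rfl fun r _ ↦ ?_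
  rw [Finset.sum_comm]
  refine Finset.sum_congr rfl fun s _ ↦ Finset.sum_congr rfl fun γ _ ↦ ?_
  ring

namespace IsPoissonKernelFor

lemma stronglyMeasurable_column (hP : IsPoissonKernelFor n M A P) (β : Fin M) :
    StronglyMeasurable (column P β) :=
  ((WithLp.measurable_toLp 2 _).comp (measurable_pi_iff.2 fun γ ↦ hP.1 γ β)).stronglyMeasurable

lemma exists_norm_column_le (hP : IsPoissonKernelFor n M A P) (β : Fin M) :
    ∃ C, ∀ x', ‖column P β x'‖ ≤ C * (1 + ‖x'‖ ^ 2) ^ (-(n : ℝ) / 2) := by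
  obtain ⟨C, -, hC⟩ := hP.2.1
  refine ⟨M * C, fun x' ↦ ?_⟩
  have hsum : column P β x' = ∑ γ, EuclideanSpace.single γ (P x' γ β) := by
    ext α
    simp [column, Pi.single_apply]
  calc ‖column P β x'‖ ≤ ∑ γ, ‖P x' γ β‖ := by
        rw [hsum]
        exact norm_sum_le_of_le _ fun γ _ ↦ (PiLp.norm_single _ _ γ _).le
    _ ≤ ∑ _γ : Fin M, C * (1 + ‖x'‖ ^ 2) ^ (-(n : ℝ) / 2) :=
        Finset.sum_le_sum fun γ _ ↦ hC x' γ β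
    _ = _ := by simp [mul_assoc]

variable [NeZero n]

lemma integrable_column (hP : IsPoissonKernelFor n M A P) (β : Fin M) :
    Integrable (column P β) := by
  obtain ⟨C, hC⟩ := hP.exists_norm_column_le β
  refine integrable_of_norm_le_rpow_one_add_norm_sq
    (hP.stronglyMeasurable_column β).aestronglyMeasurable ?_ hC
  rw [finrank_euclideanSpace_fin]
  exact_mod_cast Nat.pred_lt (NeZero.ne n)

lemma integral_column (hP : IsPoissonKernelFor n M A P) (β : Fin M) :
    ∫ x', column P β x' = EuclideanSpace.single β 1 := by
  ext α
  have hproj := (EuclideanSpace.proj (𝕜 := ℂ) α).integral_comp_comm (hP.integrable_column β)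
  exact hproj.symm.trans ((hP.2.2.1 α β).trans (by simp))

lemma isHalfSpaceNullSolution_column (hP : IsPoissonKernelFor n M A P) (β : Fin M) :
    IsHalfSpaceNullSolution (coeffOperator A) (poissonExtension (column P β)) := by
  intro f hf hfc hf₀
  obtain ⟨C, hC⟩ := exists_hasDerivBounds hf hfc
  have hint := integrableOn_testOperator_poissonExtension (coeffOperator A)
    (hP.stronglyMeasurable_column β) (hP.integrable_column β)
    (hfc.isCompact.image continuous_xlast) hC (Set.subset_preimage_image xlast _)
  ext α
  have hproj := (EuclideanSpace.proj (𝕜 := ℂ) α).integral_comp_comm hint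
  have hφ := hP.2.2.2 (fun y ↦ f y • EuclideanSpace.single α 1) (hf.smul contDiff_const)
    hfc.smul_right ((tsupport_smul_subset_left f _).trans hf₀) β
  refine hproj.symm.trans (Eq.trans ?_ hφ)
  congr 1 with x
  refine (testOperator_coeffOperator_apply f x _ α).trans (Finset.sum_congr rfl fun γ _ ↦ ?_)
  rw [Finset.sum_eq_single α]
  · simp [poissonExtension_column_apply]
  · intro α' _ hα'
    have hpd (s : Fin n) : pd s (fun _ ↦ (0 : ℂ)) = fun _ ↦ 0 := by simp [pd, funext_iff]
    simp [hα', hpd, pd]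
  · simp

lemma column_ae_eq (hA : LegendreHadamard A) (hP : IsPoissonKernelFor n M A P)
    (hQ : IsPoissonKernelFor n M A Q) (β : Fin M) : column P β =ᵐ[volume] column Q β := by
  obtain ⟨κ, hκ, hell⟩ := hA.exists_isElliptic
  obtain ⟨C, hC⟩ := hP.exists_norm_column_le β
  obtain ⟨D, hD⟩ := hQ.exists_norm_column_le β
  have hnull : IsHalfSpaceNullSolution (coeffOperator A)
      (poissonExtension (column P β - column Q β)) :=
    (hP.isHalfSpaceNullSolution_column β).poissonExtension_sub
      (hQ.isHalfSpaceNullSolution_column β) (hP.stronglyMeasurable_column β)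
      (hQ.stronglyMeasurable_column β) (hP.integrable_column β) (hQ.integrable_column β)
  have hdecay (x') : ‖(column P β - column Q β) x'‖ ≤
      (C + D) * (1 + ‖x'‖ ^ 2) ^ (-(n : ℝ) / 2) := by
    rw [add_mul]
    exact norm_sub_le_of_le (hC x') (hD x')
  have hmean : ∫ x', (column P β - column Q β) x' = 0 := by
    rw [integral_sub' (hP.integrable_column β) (hQ.integrable_column β), hP.integral_column,
      hQ.integral_column, sub_self]
  exact (sub_ae_eq_zero _ _).1 <| hnull.ae_eq_zero hκ hell
    ((hP.stronglyMeasurable_column β).sub (hQ.stronglyMeasurable_column β)) hdecay hmean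

end IsPoissonKernelFor

end Matrix

/-- Uniqueness of the Poisson kernel for an elliptic system
in the upper half space. -/
theorem statement4
    (n M : ℕ) (hn : 2 ≤ n) (hM : 1 ≤ M)
    (A : Fin n → Fin n → Fin M → Fin M → ℂ)
    (hA : LegendreHadamard A)
    (P Q : EuclideanSpace ℝ (Fin (n - 1)) → Matrix (Fin M) (Fin M) ℂ)
    (hP : IsPoissonKernelFor n M A P) (hQ : IsPoissonKernelFor n M A Q) :
    ∀ᵐ x' : EuclideanSpace ℝ (Fin (n - 1)), P x' = Q x' := by
  have : NeZero n := ⟨by omega⟩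
  filter_upwards [ae_all_iff.2 (hP.column_ae_eq hA hQ)] with x' hx'
  ext α β
  exact congrArg (· α) (hx' β)

end
end

section
/- Let A ∈ ℂ^{2×2} be a symmetric matrix satisfying Re(⟨Aξ,ξ⟩) > 0 for every ξ ∈ ℝ²∖{0}, where ⟨w,z⟩ := w₁z₁ + w₂z₂. Then ∫_{S¹} ⟨Aξ,(ξ₂,-ξ₁)⟩ / ⟨Aξ,ξ⟩ dσ(ξ) = 0, where σ is the arc-length measure on the unit circle S¹ ⊂ ℝ². -/
open MeasureTheory Filter Metric Real
open scoped ENNReal NNReal Topology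

noncomputable section

/-!
The `1`-form `⟨Aξ, dξ⟩ / ⟨Aξ, ξ⟩` is exact: since `A` is symmetric, `d⟨Aξ, ξ⟩ = 2⟨Aξ, dξ⟩`, so it is
half the differential of `log ⟨Aξ, ξ⟩` for any branch of the logarithm defined on the values of the
quadratic form. Its integral along a closed curve therefore vanishes. On the unit circle
`(ξ₂, -ξ₁)` is the negative of the unit tangent vector, so the integral in question is of this kind.
-/

open scoped Matrix

section LogDerivative

variable {f f' : ℝ → ℂ} {a b : ℝ} {c : ℂ}

theorem hasDerivAt_log_const_mul {z : ℂ} {t : ℝ} (hf : HasDerivAt f z t)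
    (hslit : c * f t ∈ Complex.slitPlane) :
    HasDerivAt (fun x => Complex.log (c * f x)) (z / f t) t := by
  have hc : c ≠ 0 := left_ne_zero_of_mul (Complex.slitPlane_ne_zero hslit)
  simpa only [mul_div_mul_left _ _ hc] using (hf.const_mul c).clog_real hslit

theorem integral_div_eq_zero_of_hasDerivAt_of_mem_slitPlane
    (hf : ∀ t ∈ Set.uIcc a b, HasDerivAt f (f' t) t)
    (hf' : IntervalIntegrable f' volume a b)
    (hslit : ∀ t ∈ Set.uIcc a b, c * f t ∈ Complex.slitPlane) (hab : f a = f b) :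
    ∫ t in a..b, f' t / f t = 0 := by
  have hf_ne : ∀ t ∈ Set.uIcc a b, f t ≠ 0 := fun t ht =>
    right_ne_zero_of_mul (Complex.slitPlane_ne_zero (hslit t ht))
  have hf_cont : ContinuousOn f (Set.uIcc a b) := fun t ht =>
    (hf t ht).continuousAt.continuousWithinAt
  have hint : IntervalIntegrable (fun t => f' t / f t) volume a b := by
    simpa only [div_eq_mul_inv, Pi.inv_apply] using hf'.mul_continuousOn (hf_cont.inv₀ hf_ne)
  rw [intervalIntegral.integral_eq_sub_of_hasDerivAt
    (fun t ht => hasDerivAt_log_const_mul (hf t ht) (hslit t ht)) hint, hab, sub_self]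

end LogDerivative

section QuadraticForm

variable {n : Type*} [Fintype n]

theorem mulVec_dotProduct_self_eq_sum {R : Type*} [CommSemiring R] (A : Matrix n n R)
    (v : n → R) : A *ᵥ v ⬝ᵥ v = ∑ r, ∑ s, A r s * v r * v s := by
  simp only [dotProduct, Matrix.mulVec, Finset.sum_mul, mul_right_comm]

theorem hasDerivAt_dotProduct {𝕜 R : Type*} [NontriviallyNormedField 𝕜] [NormedRing R]
    [NormedAlgebra 𝕜 R] {v w : 𝕜 → n → R} {v' w' : n → R} {t : 𝕜}
    (hv : HasDerivAt v v' t) (hw : HasDerivAt w w' t) :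
    HasDerivAt (fun x => v x ⬝ᵥ w x) (v' ⬝ᵥ w t + v t ⬝ᵥ w') t := by
  simpa only [dotProduct, Finset.sum_add_distrib] using
    HasDerivAt.fun_sum fun i _ => (hasDerivAt_pi.1 hv i).fun_mul (hasDerivAt_pi.1 hw i)

theorem hasDerivAt_mulVec {m 𝕜 R : Type*} [Finite m] [NontriviallyNormedField 𝕜] [NormedRing R]
    [NormedAlgebra 𝕜 R] (A : Matrix m n R) {v : 𝕜 → n → R} {v' : n → R} {t : 𝕜}
    (hv : HasDerivAt v v' t) : HasDerivAt (fun x => A *ᵥ v x) (A *ᵥ v') t := by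
  have := Fintype.ofFinite m
  refine hasDerivAt_pi.2 fun i => ?_
  simpa only [Matrix.mulVec, zero_dotProduct, zero_add] using
    hasDerivAt_dotProduct (hasDerivAt_const t (A i)) hv

theorem mulVec_dotProduct_comm_of_isSymm {R : Type*} [CommSemiring R] {A : Matrix n n R}
    (hA : A.IsSymm) (v w : n → R) : A *ᵥ v ⬝ᵥ w = A *ᵥ w ⬝ᵥ v := by
  rw [dotProduct_comm, Matrix.dotProduct_mulVec, ← Matrix.mulVec_transpose, hA.eq]

theorem hasDerivAt_mulVec_dotProduct_self {𝕜 R : Type*} [NontriviallyNormedField 𝕜]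
    [NormedCommRing R] [NormedAlgebra 𝕜 R] {A : Matrix n n R} (hA : A.IsSymm)
    {v : 𝕜 → n → R} {v' : n → R} {t : 𝕜} (hv : HasDerivAt v v' t) :
    HasDerivAt (fun x => A *ᵥ v x ⬝ᵥ v x) (2 * (A *ᵥ v t ⬝ᵥ v')) t := by
  simpa only [mulVec_dotProduct_comm_of_isSymm hA v', ← two_mul] using
    hasDerivAt_dotProduct (hasDerivAt_mulVec A hv) hv

theorem integral_mulVec_dotProduct_div_eq_zero_of_closed {A : Matrix n n ℂ} (hA : A.IsSymm)
    {γ γ' : ℝ → n → ℂ} {a b : ℝ} {c : ℂ} (hγ : ∀ t ∈ Set.uIcc a b, HasDerivAt γ (γ' t) t)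
    (hγ' : ContinuousOn γ' (Set.uIcc a b))
    (hslit : ∀ t ∈ Set.uIcc a b, c * (A *ᵥ γ t ⬝ᵥ γ t) ∈ Complex.slitPlane)
    (hclosed : γ a = γ b) :
    ∫ t in a..b, (A *ᵥ γ t ⬝ᵥ γ' t) / (A *ᵥ γ t ⬝ᵥ γ t) = 0 := by
  have hγ_cont : ContinuousOn γ (Set.uIcc a b) := fun t ht =>
    (hγ t ht).continuousAt.continuousWithinAt
  have hint : IntervalIntegrable (fun t => 2 * (A *ᵥ γ t ⬝ᵥ γ' t)) volume a b := by
    have hpair : Continuous fun p : (n → ℂ) × (n → ℂ) => 2 * (A *ᵥ p.1 ⬝ᵥ p.2) := by fun_prop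
    exact (hpair.comp_continuousOn (hγ_cont.prodMk hγ')).intervalIntegrable
  have hlog := integral_div_eq_zero_of_hasDerivAt_of_mem_slitPlane
    (fun t ht => hasDerivAt_mulVec_dotProduct_self hA (hγ t ht)) hint hslit (by rw [hclosed])
  simpa only [mul_div_assoc, intervalIntegral.integral_const_mul, mul_eq_zero,
    OfNat.ofNat_ne_zero, false_or] using hlog

end QuadraticForm

section UnitCircle

theorem cos_sin_ne_zero (θ : ℝ) : ![cos θ, sin θ] ≠ 0 := by
  intro h
  have hcos : cos θ = 0 := congrFun h 0
  have hsin : sin θ = 0 := congrFun h 1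
  simpa [hcos, hsin] using sin_sq_add_cos_sq θ

theorem hasDerivAt_ofReal_cos_sin (θ : ℝ) :
    HasDerivAt (fun x => Complex.ofReal ∘ ![cos x, sin x])
      (Complex.ofReal ∘ ![-sin θ, cos θ]) θ := by
  refine hasDerivAt_pi.2 fun i => HasDerivAt.ofReal_comp ?_
  fin_cases i
  exacts [hasDerivAt_cos θ, hasDerivAt_sin θ]

/-- The factor `c` rotates a ray omitted by the quadratic form onto the negative real axis, where
the principal logarithm has its cut. -/
theorem statement6_general
    (A : Matrix (Fin 2) (Fin 2) ℂ) (hsym : ∀ r s, A r s = A s r) (c : ℂ)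
    (hslit : ∀ ξ : Fin 2 → ℝ, ξ ≠ 0 →
      c * (∑ r, ∑ s, A r s * (ξ r : ℂ) * (ξ s : ℂ)) ∈ Complex.slitPlane) :
    (∫ θ in (0 : ℝ)..(2 * π),
      ((A 0 0 * (Real.cos θ : ℂ) + A 0 1 * (Real.sin θ : ℂ)) * (Real.sin θ : ℂ)
          - (A 1 0 * (Real.cos θ : ℂ) + A 1 1 * (Real.sin θ : ℂ)) * (Real.cos θ : ℂ))
        / ((A 0 0 * (Real.cos θ : ℂ) + A 0 1 * (Real.sin θ : ℂ)) * (Real.cos θ : ℂ)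
          + (A 1 0 * (Real.cos θ : ℂ) + A 1 1 * (Real.sin θ : ℂ)) * (Real.sin θ : ℂ)))
      = 0 := by
  have htangent : Continuous fun θ => Complex.ofReal ∘ ![-sin θ, cos θ] :=
    continuous_pi fun i => Complex.continuous_ofReal.comp <| by
      fin_cases i
      exacts [continuous_sin.neg, continuous_cos]
  have hcircle := integral_mulVec_dotProduct_div_eq_zero_of_closed
    (Matrix.IsSymm.ext fun r s => hsym s r) (a := 0) (b := 2 * π)
    (fun θ _ => hasDerivAt_ofReal_cos_sin θ) htangent.continuousOn
    (fun θ _ => by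
      simpa only [mulVec_dotProduct_self_eq_sum, Function.comp_apply] using
        hslit _ (cos_sin_ne_zero θ))
    (by simp)
  rw [← neg_eq_zero, ← intervalIntegral.integral_neg, ← hcircle]
  refine intervalIntegral.integral_congr fun θ _ => ?_
  simp [Matrix.mulVec, dotProduct, Fin.sum_univ_two, ← neg_div, sub_eq_neg_add, add_comm]

end UnitCircle

/-- For a symmetric `2×2` complex matrix `A` whose quadratic form has
positive real part on `ℝ²∖{0}`, the arc-length integral over the unit circle (written via
its arc-length parametrization `ξ = (cos θ, sin θ)`, `θ ∈ [0, 2π]`) of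
`⟨Aξ, (ξ₂, -ξ₁)⟩ / ⟨Aξ, ξ⟩` vanishes. -/
theorem statement6
    (A : Matrix (Fin 2) (Fin 2) ℂ) (hsym : ∀ r s, A r s = A s r)
    (hell : ∀ ξ : Fin 2 → ℝ, ξ ≠ 0 →
      0 < (∑ r, ∑ s, A r s * (ξ r : ℂ) * (ξ s : ℂ)).re) :
    (∫ θ in (0 : ℝ)..(2 * π),
      ((A 0 0 * (Real.cos θ : ℂ) + A 0 1 * (Real.sin θ : ℂ)) * (Real.sin θ : ℂ)
          - (A 1 0 * (Real.cos θ : ℂ) + A 1 1 * (Real.sin θ : ℂ)) * (Real.cos θ : ℂ))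
        / ((A 0 0 * (Real.cos θ : ℂ) + A 0 1 * (Real.sin θ : ℂ)) * (Real.cos θ : ℂ)
          + (A 1 0 * (Real.cos θ : ℂ) + A 1 1 * (Real.sin θ : ℂ)) * (Real.sin θ : ℂ)))
      = 0 := by
  exact statement6_general A hsym 1 fun ξ hξ => by
    simpa only [one_mul] using Complex.mem_slitPlane_iff.2 (Or.inl (hell ξ hξ))

end
end
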